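/- arXiv:2404.09070 — 3 statements merged into one kernel-verified Lean document; each statement's English description precedes it below -/
import Mathlib

section
/- The Jacobson radical of the group algebra ℤ₂[A₄] equals the two-sided ideal of ℤ₂[A₄] generated by the image of the Jacobson radical of ℤ₂[V₄] under the algebra homomorphism ℤ₂[V₄] → ℤ₂[A₄] induced by the inclusion V₄ ≤ A₄. -/
/-- `A₄`, the alternating group on 4 letters. -/
abbrev A4 : Type := alternatingGroup (Fin 4)

/-- `a = (12)(34)` as an element of `A₄`. -/
def aP : A4 := ⟨Equiv.swap 0 1 * Equiv.swap 2 3, Equiv.Perm.mem_alternatingGroup.mpr (by decide)⟩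
/-- `b = (13)(24)` as an element of `A₄`. -/
def bP : A4 := ⟨Equiv.swap 0 2 * Equiv.swap 1 3, Equiv.Perm.mem_alternatingGroup.mpr (by decide)⟩
/-- `c = (14)(23)` as an element of `A₄`. -/
def cP : A4 := ⟨Equiv.swap 0 3 * Equiv.swap 1 2, Equiv.Perm.mem_alternatingGroup.mpr (by decide)⟩

/-- The Klein four subgroup `V₄ = {1, (12)(34), (13)(24), (14)(23)}` of `A₄`. -/
def V4 : Subgroup A4 where
  carrier := {1, aP, bP, cP}
  one_mem' := Or.inl rfl
  mul_mem' := by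
    intro a b ha hb
    simp only [Set.mem_insert_iff, Set.mem_singleton_iff] at *
    revert ha hb; revert a b
    decide
  inv_mem' := by
    intro a ha
    simp only [Set.mem_insert_iff, Set.mem_singleton_iff] at *
    revert ha; revert a
    decide

/-- reduction map -/
noncomputable def redMap (G : Type) [Group G] (N : Subgroup G) [N.Normal] :
    MonoidAlgebra ℤ_[2] G →+* MonoidAlgebra (ZMod 2) (G ⧸ N) :=
  (MonoidAlgebra.mapRingHom (G ⧸ N) (PadicInt.toZMod (p := 2))).comp
    (MonoidAlgebra.mapDomainRingHom ℤ_[2] (QuotientGroup.mk' N))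

theorem redMap_surj (G : Type) [Group G] (N : Subgroup G) [N.Normal] :
    Function.Surjective (redMap G N) := by
  intro y
  induction y using MonoidAlgebra.induction_linear with
  | zero => exact ⟨0, map_zero _⟩
  | add f g hf hg =>
    obtain ⟨a, rfl⟩ := hf
    obtain ⟨b, rfl⟩ := hg
    exact ⟨a + b, map_add _ _ _⟩
  | single q r =>
    obtain ⟨g, rfl⟩ := QuotientGroup.mk'_surjective N q
    obtain ⟨s, rfl⟩ := ZMod.ringHom_surjective (PadicInt.toZMod (p := 2)) r
    exact ⟨MonoidAlgebra.single g s, by simp [redMap]⟩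

theorem jac_le_ker (G : Type) [Group G] [Finite G] (N : Subgroup G) [N.Normal]
    (h : (Nat.card (G ⧸ N) : ZMod 2) ≠ 0) :
    Ring.jacobson (MonoidAlgebra ℤ_[2] G) ≤ RingHom.ker (redMap G N) := by
  have : NeZero (Nat.card (G ⧸ N) : ZMod 2) := ⟨h⟩
  have : RingHomSurjective (redMap G N) := ⟨redMap_surj G N⟩
  intro x hx
  have h1 := Ring.le_comap_jacobson (redMap G N) hx
  rw [IsSemisimpleRing.jacobson_eq_bot] at h1
  exact h1

theorem ker_le (G : Type) [Group G] (N : Subgroup G) [N.Normal]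
    (I : Ideal (MonoidAlgebra ℤ_[2] G)) (h2 : (2 : MonoidAlgebra ℤ_[2] G) ∈ I)
    (hN : ∀ n ∈ N, MonoidAlgebra.single n (1 : ℤ_[2]) - 1 ∈ I) :
    RingHom.ker (redMap G N) ≤ I := by
  intro x hx
  have key : ∀ x : MonoidAlgebra ℤ_[2] G, x - MonoidAlgebra.mapDomain (Quotient.out : G ⧸ N → G)
      (MonoidAlgebra.mapDomainRingHom ℤ_[2] (QuotientGroup.mk' N) x) ∈ I := by
    intro x
    induction x using MonoidAlgebra.induction_linear with
    | zero => simp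
    | add f g hf hg =>
      have := I.add_mem hf hg
      rw [map_add, MonoidAlgebra.mapDomain_add]
      convert this using 1
      abel
    | single g r =>
      have hn : g⁻¹ * (Quotient.out (QuotientGroup.mk' N g)) ∈ N := by
        rw [← QuotientGroup.eq]
        exact (Quotient.out_eq _).symm
      have := I.neg_mem (I.mul_mem_left (MonoidAlgebra.single g r) (hN _ hn))
      convert this using 1
      simp [mul_sub, MonoidAlgebra.single_mul_single]
  have hk := key x
  have h3 : ∀ q, ∃ c, (MonoidAlgebra.mapDomainRingHom ℤ_[2] (QuotientGroup.mk' N) x).coeff q = 2 * c := by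
    intro q
    have : (redMap G N x).coeff q = 0 := by rw [RingHom.mem_ker.1 hx]; rfl
    have h4 : PadicInt.toZMod
      ((MonoidAlgebra.mapDomainRingHom ℤ_[2] (QuotientGroup.mk' N) x).coeff q) = 0 := by
      simpa [redMap] using this
    rw [← RingHom.mem_ker, PadicInt.ker_toZMod, PadicInt.maximalIdeal_eq_span_p,
      Ideal.mem_span_singleton] at h4
    exact_mod_cast h4
  have h5 : MonoidAlgebra.mapDomain (Quotient.out : G ⧸ N → G)
      (MonoidAlgebra.mapDomainRingHom ℤ_[2] (QuotientGroup.mk' N) x) ∈ I := by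
    generalize (MonoidAlgebra.mapDomainRingHom ℤ_[2] (QuotientGroup.mk' N) x) = y at h3
    choose c hc using h3
    have hy : y = ∑ q ∈ y.coeff.support, MonoidAlgebra.single q (y.coeff q) := by
      exact (MonoidAlgebra.sum_coeff_single y).symm
    have hsum : ∀ s : Finset (G ⧸ N), MonoidAlgebra.mapDomain (Quotient.out : G ⧸ N → G)
        (∑ q ∈ s, MonoidAlgebra.single q (y.coeff q)) =
        ∑ q ∈ s, MonoidAlgebra.single (Quotient.out q) (y.coeff q) := by
      intro s
      classical
      induction s using Finset.induction_on with
      | empty => simp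
      | insert i s hi ih => rw [Finset.sum_insert hi, Finset.sum_insert hi,
          MonoidAlgebra.mapDomain_add, ih, MonoidAlgebra.mapDomain_single]
    rw [hy, hsum]
    refine I.sum_mem fun q _ => ?_
    have : MonoidAlgebra.single (Quotient.out q) (c q) * (2 : MonoidAlgebra ℤ_[2] G) ∈ I :=
      I.mul_mem_left _ h2
    convert this using 1
    rw [hc, mul_two, ← MonoidAlgebra.single_add, ← two_mul]
  simpa using I.add_mem hk h5

theorem two_mem (G : Type) [Group G] [Finite G] :
    (2 : MonoidAlgebra ℤ_[2] G) ∈ Ring.jacobson (MonoidAlgebra ℤ_[2] G) := by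
  rw [Ring.jacobson_eq_sInf_isMaximal, Submodule.mem_sInf]
  intro (m : Ideal _) hm
  by_contra h
  have hm : Ideal.IsMaximal m := hm
  have h1 : m ⊔ Ideal.span {2} = ⊤ := by
    refine hm.out.2 _ (lt_of_le_of_ne le_sup_left fun h' => h ?_)
    rw [h']
    exact Ideal.mem_sup_right (Ideal.subset_span rfl)
  refine hm.ne_top ?_
  have h5 : (⊤ : Submodule ℤ_[2] (MonoidAlgebra ℤ_[2] G)) ≤ m.restrictScalars ℤ_[2] := by
    refine Submodule.le_of_le_smul_of_le_jacobson_bot (I := IsLocalRing.maximalIdeal ℤ_[2])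
      Module.Finite.fg_top (IsLocalRing.maximalIdeal_le_jacobson _) ?_
    intro x _
    have hx : x ∈ m ⊔ Ideal.span {2} := by rw [h1]; trivial
    obtain ⟨y, hy, z, hz, rfl⟩ := Submodule.mem_sup.1 hx
    obtain ⟨w, rfl⟩ := Ideal.mem_span_singleton'.1 hz
    refine Submodule.add_mem_sup hy ?_
    have : w * 2 = (2 : ℤ_[2]) • w := by rw [mul_two, two_smul]
    rw [this]
    refine Submodule.smul_mem_smul ?_ trivial
    rw [PadicInt.maximalIdeal_eq_span_p]
    exact Ideal.subset_span rfl
  exact eq_top_iff.2 fun x _ => h5 (x := x) trivial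

theorem klein_mem (G : Type) [Group G] [Finite G] (N : Subgroup G) [N.Normal] (a b : G)
    (ha : a * a = 1) (hb : b * b = 1) (hab : a * b = b * a)
    (hN : ∀ n ∈ N, n = 1 ∨ n = a ∨ n = b ∨ n = a * b) (n : G) (hn : n ∈ N) :
    MonoidAlgebra.single n (1 : ℤ_[2]) - 1 ∈ Ring.jacobson (MonoidAlgebra ℤ_[2] G) := by
  have h2 := two_mem G
  rw [Ring.jacobson_eq_sInf_isMaximal, Submodule.mem_sInf] at h2 ⊢
  intro (m : Ideal _) hm
  have h2 : 2 ∈ m := h2 m hm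
  have hm : Ideal.IsMaximal m := hm
  have hs : IsSimpleModule (MonoidAlgebra ℤ_[2] G) (MonoidAlgebra ℤ_[2] G ⧸ m) :=
    isSimpleModule_iff_isCoatom.2 hm.out
  let d : G → MonoidAlgebra ℤ_[2] G := fun g => MonoidAlgebra.single g 1
  have dm : ∀ g h, d g * d h = d (g * h) := fun g h => by simp [d]
  have d1 : d 1 = 1 := rfl
  have t2 : ∀ v : MonoidAlgebra ℤ_[2] G ⧸ m, v + v = 0 := by
    intro v
    obtain ⟨v, rfl⟩ := Submodule.Quotient.mk_surjective m v
    rw [← Submodule.Quotient.mk_add, Submodule.Quotient.mk_eq_zero, ← mul_two]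
    exact m.mul_mem_left _ h2
  let F : Submodule (MonoidAlgebra ℤ_[2] G) (MonoidAlgebra ℤ_[2] G ⧸ m) :=
    { carrier := {v | ∀ n ∈ N, d n • v = v}
      zero_mem' := fun n _ => smul_zero _
      add_mem' := fun {u v} hu hv n hn => by rw [smul_add, hu n hn, hv n hn]
      smul_mem' := by
        intro c v hv
        induction c using MonoidAlgebra.induction_linear with
        | zero => intro n _; simp
        | add f g hf hg => intro n hn; rw [add_smul, smul_add, hf n hn, hg n hn]
        | single g r =>
          intro n hn
          have hc : d n * MonoidAlgebra.single g r =
              MonoidAlgebra.single g r * d (g⁻¹ * n * g) := by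
            simp [d, mul_assoc]
          rw [smul_smul, hc, mul_smul, hv]
          simpa using Subgroup.Normal.conj_mem ‹N.Normal› n hn g⁻¹ }
  have hF : F ≠ ⊥ := by
    obtain ⟨v, hv⟩ : ∃ v : MonoidAlgebra ℤ_[2] G ⧸ m, v ≠ 0 :=
      by
        have := IsSimpleModule.nontrivial (MonoidAlgebra ℤ_[2] G) (MonoidAlgebra ℤ_[2] G ⧸ m)
        exact exists_ne 0
    have step : ∀ g : G, g * g = 1 → ∀ v : MonoidAlgebra ℤ_[2] G ⧸ m,
        d g • (d g • v + v) = d g • v + v := by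
      intro g hg v
      rw [smul_add, smul_smul, dm, hg, d1, one_smul, add_comm]
    have cancel : ∀ u v : MonoidAlgebra ℤ_[2] G ⧸ m, u + v = 0 → u = v := by
      intro u v h
      exact add_right_cancel (h.trans (t2 v).symm)
    have : ∃ v : MonoidAlgebra ℤ_[2] G ⧸ m, v ≠ 0 ∧ d a • v = v := by
      by_cases h : d a • v + v = 0
      · exact ⟨v, hv, cancel _ _ h⟩
      · exact ⟨_, h, step a ha v⟩
    obtain ⟨v, hv, hva⟩ := this
    have : ∃ v : MonoidAlgebra ℤ_[2] G ⧸ m, v ≠ 0 ∧ d a • v = v ∧ d b • v = v := by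
      by_cases h : d b • v + v = 0
      · exact ⟨v, hv, hva, cancel _ _ h⟩
      · refine ⟨_, h, ?_, step b hb v⟩
        rw [smul_add, smul_smul, dm, hab, ← dm, mul_smul, hva]
    obtain ⟨v, hv, hva, hvb⟩ := this
    intro hbot
    have hvF : v ∈ F := by
      intro n hn
      rcases hN n hn with rfl | rfl | rfl | rfl
      · rw [d1, one_smul]
      · exact hva
      · exact hvb
      · rw [← dm, mul_smul, hvb, hva]
    rw [hbot] at hvF
    exact hv hvF
  have hT : F = ⊤ := (eq_bot_or_eq_top F).resolve_left hF
  have h1 : Submodule.Quotient.mk (1 : MonoidAlgebra ℤ_[2] G) ∈ F := by rw [hT]; trivial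
  have h3 := h1 n hn
  rw [← Submodule.Quotient.mk_smul, Submodule.Quotient.eq] at h3
  simpa [d] using h3

instance V4_normal : V4.Normal := by
  constructor
  have : ∀ n : A4, (n = 1 ∨ n = aP ∨ n = bP ∨ n = cP) → ∀ g : A4,
      (g * n * g⁻¹ = 1 ∨ g * n * g⁻¹ = aP ∨ g * n * g⁻¹ = bP ∨ g * n * g⁻¹ = cP) := by decide
  exact this

theorem V4_card : Nat.card V4 = 4 := by
  have h : (V4 : Set A4) = (({1, aP, bP, cP} : Finset A4) : Set A4) := by
    ext x
    simp only [Finset.coe_insert, Finset.coe_singleton]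
    rfl
  have h2 : Nat.card V4 = (V4 : Set A4).ncard := rfl
  rw [h2, h, Set.ncard_coe_finset]
  decide

theorem quot_card : Nat.card (A4 ⧸ V4) = 3 := by
  have h := Subgroup.card_eq_card_quotient_mul_card_subgroup V4
  have h12 : Nat.card A4 = 12 := by
    rw [Nat.card_eq_fintype_card]; decide
  rw [V4_card, h12] at h
  omega

theorem A4_sub (n : A4) (hn : n ∈ V4) :
    MonoidAlgebra.single n (1 : ℤ_[2]) - 1 ∈ Ring.jacobson (MonoidAlgebra ℤ_[2] A4) := by
  refine klein_mem A4 V4 aP bP (by decide) (by decide) (by decide) ?_ n hn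
  have : aP * bP = cP := by decide
  rw [this]
  exact fun n hn => hn

theorem V4_sub (n : V4) :
    MonoidAlgebra.single n (1 : ℤ_[2]) - 1 ∈ Ring.jacobson (MonoidAlgebra ℤ_[2] V4) := by
  have ha : aP ∈ V4 := Or.inr (Or.inl rfl)
  have hb : bP ∈ V4 := Or.inr (Or.inr (Or.inl rfl))
  have h : aP * bP = cP := by decide
  refine klein_mem V4 ⊤ ⟨aP, ha⟩ ⟨bP, hb⟩ (Subtype.ext (by decide : aP * aP = 1))
    (Subtype.ext (by decide : bP * bP = 1)) (Subtype.ext (by decide : aP * bP = bP * aP))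
    ?_ n trivial
  rintro ⟨n, hn⟩ -
  rcases (show n = 1 ∨ n = aP ∨ n = bP ∨ n = cP from hn) with rfl | rfl | rfl | rfl
  · exact Or.inl rfl
  · exact Or.inr (Or.inl rfl)
  · exact Or.inr (Or.inr (Or.inl rfl))
  · exact Or.inr (Or.inr (Or.inr (Subtype.ext h.symm)))

/-- The Jacobson radical of `ℤ₂[A₄]` equals the two-sided ideal generated by the image of
the Jacobson radical of `ℤ₂[V₄]` under the ring homomorphism `ℤ₂[V₄] → ℤ₂[A₄]` induced by
the inclusion `V₄ ≤ A₄`. -/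
theorem jacobson_radical_Z2_A4 :
    (⊥ : Ideal (MonoidAlgebra ℤ_[2] A4)).jacobson =
      TwoSidedIdeal.asIdeal
        (TwoSidedIdeal.span
          ((MonoidAlgebra.mapDomainRingHom ℤ_[2] V4.subtype) ''
            ((⊥ : Ideal (MonoidAlgebra ℤ_[2] V4)).jacobson : Set (MonoidAlgebra ℤ_[2] V4)))) := by
  rw [Ideal.jacobson_bot, Ideal.jacobson_bot]
  apply le_antisymm
  · refine (jac_le_ker A4 V4 (by rw [quot_card]; decide)).trans (ker_le A4 V4 _ ?_ ?_)
    · rw [TwoSidedIdeal.mem_asIdeal]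
      exact TwoSidedIdeal.subset_span ⟨2, two_mem V4, map_ofNat _ 2⟩
    · intro n hn
      rw [TwoSidedIdeal.mem_asIdeal]
      refine TwoSidedIdeal.subset_span ⟨_, V4_sub ⟨n, hn⟩, ?_⟩
      rw [map_sub, map_one]
      simp
  · have h1 : (TwoSidedIdeal.span
          ((MonoidAlgebra.mapDomainRingHom ℤ_[2] V4.subtype) ''
            (Ring.jacobson (MonoidAlgebra ℤ_[2] V4) : Set (MonoidAlgebra ℤ_[2] V4)))) ≤
        (Ring.jacobson (MonoidAlgebra ℤ_[2] A4)).toTwoSided := by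
      rw [TwoSidedIdeal.span_le]
      rintro _ ⟨x, hx, rfl⟩
      have hk := jac_le_ker V4 ⊤ (by simp) hx
      have := ker_le V4 ⊤ ((Ring.jacobson (MonoidAlgebra ℤ_[2] A4)).comap
        (MonoidAlgebra.mapDomainRingHom ℤ_[2] V4.subtype)) ?_ ?_ hk
      · simpa using this
      · rw [Ideal.mem_comap, map_ofNat]
        exact two_mem A4
      · intro n _
        rw [Ideal.mem_comap, map_sub, map_one]
        simpa using A4_sub n n.2
    intro x hx
    simpa using h1 hx
end

section
/- Let ℤ₃ carry the trivial A₄-action. Then for every n ≥ 1 the group cohomology H^n(A₄, ℤ₃) is isomorphic to ℤ/3ℤ if n is even and is zero if n is odd. -/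
abbrev C3 : Type := Multiplicative (ZMod 3)
def idx : Fin 4 → Fin 4 → ZMod 3 :=
  ![![0,0,1,2],![0,0,2,1],![1,2,0,0],![2,1,0,0]]
theorem aux1 : ∀ σ τ : A4,
   idx ((σ * τ).1 0) ((σ*τ).1 1) = idx (σ.1 0) (σ.1 1) + idx (τ.1 0) (τ.1 1) := by
  set_option maxRecDepth 100000 in decide +kernel
def q : A4 →* C3 := MonoidHom.mk' (fun σ => Multiplicative.ofAdd (idx (σ.1 0) (σ.1 1))) aux1
theorem q_fiber : ∀ c : C3, (Finset.univ.filter (fun g : A4 => q g = c)).card = 4 := by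
  set_option maxRecDepth 100000 in decide +kernel

open CategoryTheory Rep

noncomputable section

theorem q_surj : Function.Surjective q := by
  intro c
  have h := q_fiber c
  obtain ⟨g, hg⟩ := Finset.card_pos.1 (by rw [h]; norm_num : 0 < (Finset.univ.filter (fun g : A4 => q g = c)).card)
  exact ⟨g, (Finset.mem_filter.1 hg).2⟩

def u4 : ℤ_[3]ˣ := (PadicInt.isUnit_iff.2 (by
  have : ‖((4 : ℤ) : ℤ_[3])‖ = 1 := by
    rcases lt_or_eq_of_le (PadicInt.norm_le_one ((4:ℤ) : ℤ_[3])) with h | h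
    · rw [PadicInt.norm_int_lt_one_iff_dvd] at h; norm_num at h
    · exact h
  exact_mod_cast this) : IsUnit (4 : ℤ_[3])).unit

theorem u4_mul : (↑u4⁻¹ : ℤ_[3]) * 4 = 1 := by
  have h : ((u4 : ℤ_[3]ˣ) : ℤ_[3]) = 4 := IsUnit.unit_spec _
  rw [← h]; simp

abbrev RR := ℤ_[3]

def sLin : MonoidAlgebra RR C3 →ₗ[RR] MonoidAlgebra RR A4 where
  toFun x := (↑u4⁻¹ : RR) • ∑ g : A4, MonoidAlgebra.single g (x.coeff (q g))
  map_add' x y := by simp [Finset.sum_add_distrib]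
  map_smul' r x := by
    simp only [MonoidAlgebra.coeff_smul, Finsupp.smul_apply, RingHom.id_apply, Finset.smul_sum, MonoidAlgebra.smul_single, smul_eq_mul]
    refine Finset.sum_congr rfl fun g _ => ?_
    congr 1; ring

def sHom : (resFunctor q).obj (leftRegular RR C3) ⟶ leftRegular RR A4 :=
  Rep.ofHom ⟨sLin, fun h => by
    refine LinearMap.ext fun x => ?_
    simp only [LinearMap.comp_apply]
    simp [sLin]
    symm
    apply Fintype.sum_equiv (Equiv.mulLeft h)
    intro g
    simp⟩

def pHom : leftRegular RR A4 ⟶ (resFunctor q).obj (leftRegular RR C3) :=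
  leftRegularHom ((resFunctor q).obj (leftRegular RR C3)) (MonoidAlgebra.single (1 : C3) (1 : RR))

theorem sp : sHom ≫ pHom = 𝟙 _ := by
  refine Rep.hom_ext ?_
  refine Representation.IntertwiningMap.toLinearMap_injective _ _ ?_
  refine MonoidAlgebra.lhom_ext' fun c => LinearMap.ext_ring ?_
  change (pHom.hom (sLin (MonoidAlgebra.single c 1))) = MonoidAlgebra.single c 1
  rw [sLin]
  simp [pHom]
  have h : ∀ x : A4, (MonoidAlgebra.single (q x) ((Finsupp.single c (1 : RR)) (q x)) : MonoidAlgebra RR C3)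
      = if q x = c then MonoidAlgebra.single c 1 else 0 := by
    intro x
    split_ifs with hx
    · rw [hx, Finsupp.single_eq_same]
    · rw [Finsupp.single_eq_of_ne hx, MonoidAlgebra.single_zero]
  rw [Finset.sum_congr rfl fun x _ => h x, ← Finset.sum_filter, Finset.sum_const, q_fiber,
    ← Nat.cast_smul_eq_nsmul RR, smul_smul]
  have := u4_mul
  push_cast
  rw [this, one_smul]

instance projRes : Projective ((resFunctor q).obj (leftRegular RR C3)) :=
  Retract.projective (Y := leftRegular RR A4) ⟨sHom, pHom, sp⟩

theorem genC3 : ∀ x : C3, x ∈ Subgroup.zpowers (Multiplicative.ofAdd (1 : ZMod 3)) := by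
  have h : ∀ x : C3, x = Multiplicative.ofAdd (1 : ZMod 3) ^ (x.toAdd.val) := by decide
  intro x
  rw [h x]
  exact Subgroup.npow_mem_zpowers _ _

abbrev P0 := FiniteCyclicGroup.resolution RR (G := C3) (Multiplicative.ofAdd (1 : ZMod 3)) genC3

def PA' : ProjectiveResolution ((resFunctor q).obj (Rep.trivial RR C3 RR)) where
  complex := ((resFunctor q).mapHomologicalComplex _).obj P0.complex
  projective n := projRes
  π := ((resFunctor q).mapHomologicalComplex _).map P0.π ≫
    (HomologicalComplex.singleMapHomologicalComplex _ _ _).hom.app _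
  quasiIso := by
    have : (resFunctor (k := RR) q).PreservesHomology := inferInstance
    have : QuasiIso P0.π := P0.quasiIso
    have : QuasiIso (((resFunctor q).mapHomologicalComplex _).map P0.π) := inferInstance
    exact quasiIso_comp _ _

def PA : ProjectiveResolution (Rep.trivial RR A4 RR) := PA'

def homIso (A : Rep RR C3) :
    PA.complex.linearYonedaObj RR ((resFunctor q).obj A) ≅ P0.complex.linearYonedaObj RR A :=
  HomologicalComplex.Hom.isoOfComponents
    (fun n ↦ LinearEquiv.toModuleIso
      { toFun := fun f => liftHomOfSurj q q_surj f
        invFun := fun f => (resFunctor q).map f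
        map_add' := fun _ _ => rfl
        map_smul' := fun _ _ => rfl
        left_inv := fun _ => rfl
        right_inv := fun _ => rfl }) fun _ _ _ ↦
      ModuleCat.hom_ext (LinearMap.ext fun f => rfl)

def cohIso (n : ℕ) : groupCohomology (Rep.trivial RR A4 RR) n ≅ groupCohomology (Rep.trivial RR C3 RR) n :=
  groupCohomologyIso _ n PA ≪≫ HomologicalComplex.homologyMapIso (homIso (Rep.trivial RR C3 RR)) n ≪≫
   (groupCohomologyIso _ n P0).symm

abbrev g3 : C3 := Multiplicative.ofAdd (1 : ZMod 3)

theorem surjEven {k G : Type} [CommRing k] [CommGroup G] [Fintype G] (A : Rep k G) (g : G)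
    (hg : ∀ x, x ∈ Subgroup.zpowers g) (i : ℕ) [NeZero i] (hi : Even i) :
    Function.Surjective (FiniteCyclicGroup.groupCohomologyπEven A g hg i hi) := by
  rw [← ModuleCat.epi_iff_surjective]
  have : Epi (ShortComplex.moduleCatCyclesIso <| FiniteCyclicGroup.normHomCompSub A g).inv :=
    IsSplitEpi.epi _
  exact @epi_comp _ _ _ _ _ _ this _ (epi_comp _ _)

theorem surjOdd {k G : Type} [CommRing k] [CommGroup G] [Fintype G] (A : Rep k G) (g : G)
    (hg : ∀ x, x ∈ Subgroup.zpowers g) (i : ℕ) (hi : Odd i) :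
    Function.Surjective (FiniteCyclicGroup.groupCohomologyπOdd A g hg i hi) := by
  rw [← ModuleCat.epi_iff_surjective]
  have : Epi (ShortComplex.moduleCatCyclesIso <| FiniteCyclicGroup.subCompNormHom A g).inv :=
    IsSplitEpi.epi _
  exact @epi_comp _ _ _ _ _ _ this _ (epi_comp _ _)

theorem norm_triv {k G : Type} [CommRing k] [CommGroup G] [Fintype G] (x : k) :
    (Rep.trivial k G k).norm.hom.toLinearMap x = (Fintype.card G : k) * x := by
  simp [Rep.norm, Representation.norm]

theorem even_aux {k G : Type} [CommRing k] [CommGroup G] [Fintype G] (g : G)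
    (hg : ∀ x, x ∈ Subgroup.zpowers g) (n : ℕ) [NeZero n] (hn : Even n) :
    ∃ f : k →+ groupCohomology (Rep.trivial k G k) n, Function.Surjective f ∧
      ∀ x, f x = 0 ↔ (Fintype.card G : k) ∣ x := by
  have hker : ∀ x : k, x ∈ LinearMap.ker (applyAsHom (Rep.trivial k G k) g - 𝟙 _).hom.toLinearMap := by
    intro x
    simp [sub_hom, applyAsHom]
  let ι : k →ₗ[k] LinearMap.ker (applyAsHom (Rep.trivial k G k) g - 𝟙 _).hom.toLinearMap :=
    LinearMap.codRestrict _ LinearMap.id hker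
  refine ⟨((FiniteCyclicGroup.groupCohomologyπEven (Rep.trivial k G k) g hg n hn).hom.comp ι).toAddMonoidHom, ?_, ?_⟩
  · intro y
    obtain ⟨x, hx⟩ := surjEven (Rep.trivial k G k) g hg n hn y
    exact ⟨x.1, hx⟩
  · intro x
    refine (FiniteCyclicGroup.groupCohomologyπEven_eq_zero_iff (Rep.trivial k G k) g hg n hn ⟨x, hker x⟩).trans ?_
    constructor
    · rintro ⟨y, hy⟩
      exact ⟨y, by rw [← norm_triv]; exact hy.symm⟩
    · rintro ⟨y, hy⟩
      exact ⟨y, (norm_triv (k := k) (G := G) y).trans hy.symm⟩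

theorem even_case (n : ℕ) [NeZero n] (hn : Even n) :
    Nonempty (groupCohomology (Rep.trivial RR C3 RR) n ≃+ ZMod 3) := by
  obtain ⟨f, hf, hf0⟩ := even_aux (k := RR) g3 genC3 n hn
  have hk : f.ker = (PadicInt.toZMod (p := 3)).toAddMonoidHom.ker := by
    ext x
    rw [AddMonoidHom.mem_ker, hf0]
    have h2 : x ∈ (PadicInt.toZMod (p := 3)).toAddMonoidHom.ker ↔ x ∈ RingHom.ker (PadicInt.toZMod (p := 3)) := Iff.rfl
    rw [h2, PadicInt.ker_toZMod, PadicInt.maximalIdeal_eq_span_p, Ideal.mem_span_singleton]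
    have hc : Fintype.card C3 = 3 := rfl
    rw [hc]
  exact ⟨((QuotientAddGroup.quotientKerEquivOfSurjective f hf).symm.trans
    (QuotientAddGroup.quotientAddEquivOfEq hk)).trans
    (QuotientAddGroup.quotientKerEquivOfSurjective _ (ZMod.ringHom_surjective (PadicInt.toZMod (p := 3))))⟩

theorem odd_case (n : ℕ) (hn : Odd n) :
    Subsingleton (groupCohomology (Rep.trivial RR C3 RR) n) := by
  refine subsingleton_of_forall_eq 0 fun y => ?_
  obtain ⟨x, rfl⟩ := surjOdd (Rep.trivial RR C3 RR) g3 genC3 n hn y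
  rw [FiniteCyclicGroup.groupCohomologyπOdd_eq_zero_iff]
  have h : (x : RR) = 0 := by
    have := x.2
    have h2 := (norm_triv (k := RR) (G := C3) x.1).symm.trans this
    have hc : Fintype.card C3 = 3 := rfl
    rw [hc] at h2
    exact (mul_eq_zero.1 h2).resolve_left (by norm_num)
  exact ⟨0, by rw [map_zero]; exact h.symm⟩

end

/-- With trivial action of `A₄` on `ℤ₃`, for every `n ≥ 1` the group cohomology
`H^n(A₄, ℤ₃)` is `ℤ/3ℤ` for even `n` and vanishes for odd `n`. -/
theorem cohomology_A4_trivial_Z3 (n : ℕ) (hn : 1 ≤ n) :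
    (Even n → Nonempty (groupCohomology (Rep.trivial ℤ_[3] A4 ℤ_[3]) n ≃+ ZMod 3)) ∧
    (Odd n → Subsingleton (groupCohomology (Rep.trivial ℤ_[3] A4 ℤ_[3]) n)) := by
  have : NeZero n := ⟨by omega⟩
  have e := (cohIso n).toLinearEquiv
  refine ⟨fun h => ?_, fun h => ?_⟩
  · obtain ⟨f⟩ := even_case n h
    exact ⟨e.toAddEquiv.trans f⟩
  · have := odd_case n h
    exact e.toEquiv.subsingleton
end

section
/- Let ℤ₂ carry the trivial A₄-action. For every n ≥ 1 with n not divisible by 6, the group cohomology H^n(A₄, ℤ₂) is an elementary abelian 2-group: H^n(A₄, ℤ₂) ≅ (ℤ/2ℤ)^{⌊n/6⌋ + r}, where r = 1 if n ≡ 3 or 4 (mod 6) and r = 0 if n ≡ 1, 2 or 5 (mod 6). -/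
namespace A4Coh

open CategoryTheory Representation

section Layer1

variable {G : Type} [Group G]
variable {A B C : Type} [AddCommGroup A] [Module ℤ_[2] A] [AddCommGroup B] [Module ℤ_[2] B]
  [AddCommGroup C] [Module ℤ_[2] C]
  {ρ : Representation ℤ_[2] G A} {σ : Representation ℤ_[2] G B} {τ : Representation ℤ_[2] G C}

/-- cohomology of an unbundled representation -/
abbrev HH {G : Type} [Group G] {A : Type} [AddCommGroup A] [Module ℤ_[2] A]
    (ρ : Representation ℤ_[2] G A) (n : ℕ) : Type :=
  groupCohomology (Rep.of ρ) n

/-- induced map on cohomology -/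
noncomputable def Hm (f : ρ.IntertwiningMap σ) (n : ℕ) : HH ρ n →ₗ[ℤ_[2]] HH σ n :=
  (groupCohomology.map (MonoidHom.id G) (Rep.ofHom f) n).hom

lemma Hm_comp (f : ρ.IntertwiningMap σ) (g : σ.IntertwiningMap τ) (n : ℕ) (x : HH ρ n) :
    Hm (g.comp f) n x = Hm g n (Hm f n x) := by
  unfold Hm
  rw [Rep.ofHom_comp, groupCohomology.map_id_comp]
  rfl

lemma Hm_id (n : ℕ) (x : HH ρ n) : Hm (IntertwiningMap.id ρ) n x = x := by
  have := (groupCohomology.functor ℤ_[2] G n).map_id (Rep.of ρ)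
  exact congr($(this).hom x)

lemma Hm_add (f g : ρ.IntertwiningMap σ) (n : ℕ) (x : HH ρ n) :
    Hm (f + g) n x = Hm f n x + Hm g n x := by
  have h1 : (groupCohomology.cochainsFunctor ℤ_[2] G).map (Rep.ofHom (f + g)) =
      (groupCohomology.cochainsFunctor ℤ_[2] G).map (Rep.ofHom f) +
      (groupCohomology.cochainsFunctor ℤ_[2] G).map (Rep.ofHom g) := by
    rw [Rep.ofHom_add, Functor.map_add]
  have h2 := congr((HomologicalComplex.homologyMap $h1 n).hom x)
  rw [HomologicalComplex.homologyMap_add] at h2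
  exact h2

lemma LES (f : ρ.IntertwiningMap σ) (g : σ.IntertwiningMap τ)
    (hf : Function.Injective f) (hg : Function.Surjective g)
    (hfg : ∀ x, g x = 0 ↔ ∃ y, f y = x) :
    ∃ δ : ∀ n, HH τ n →ₗ[ℤ_[2]] HH ρ (n + 1), ∀ n,
      Function.Exact (Hm f n) (Hm g n) ∧ Function.Exact (Hm g n) (δ n) ∧
      Function.Exact (δ n) (Hm f (n + 1)) := by
  let X : ShortComplex (Rep ℤ_[2] G) := ShortComplex.mk (Rep.ofHom f) (Rep.ofHom g) (by
    apply Rep.hom_ext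
    ext x
    exact (hfg (f x)).2 ⟨x, rfl⟩)
  have hX : X.ShortExact := by
    have h1 : Mono X.f := (Rep.mono_iff_injective _).2 hf
    have h2 : Epi X.g := (Rep.epi_iff_surjective _).2 hg
    have h3 : X.Exact := by
      rw [← ShortComplex.exact_map_iff_of_faithful X (forget₂ (Rep ℤ_[2] G) (ModuleCat ℤ_[2])),
        ShortComplex.moduleCat_exact_iff]
      intro x hx
      exact (hfg x).1 hx
    exact { exact := h3 }
  refine ⟨fun n => (groupCohomology.δ hX n (n+1) rfl).hom, fun n => ⟨?_, ?_, ?_⟩⟩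
  · have := groupCohomology.mapShortComplex₂_exact hX n
    exact (ShortComplex.ShortExact.moduleCat_exact_iff_function_exact _).1 this
  · have := groupCohomology.mapShortComplex₃_exact hX (i := n) (j := n+1) rfl
    exact (ShortComplex.ShortExact.moduleCat_exact_iff_function_exact _).1 this
  · have := groupCohomology.mapShortComplex₁_exact hX (i := n) (j := n+1) rfl
    exact (ShortComplex.ShortExact.moduleCat_exact_iff_function_exact _).1 this

end Layer1

section Layer2

lemma card_two {H : Type} [AddCommGroup H] [Module ℤ_[2] H] (p : ℤ_[2] →ₗ[ℤ_[2]] H)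
    (hs : Function.Surjective p) (hk : ∀ x, p x = 0 ↔ ∃ y, x = 2 * y) : Nat.card H = 2 := by
  have e1 := QuotientAddGroup.quotientKerEquivOfSurjective p.toAddMonoidHom hs
  have e2 := QuotientAddGroup.quotientKerEquivOfSurjective
    (PadicInt.toZMod (p := 2)).toAddMonoidHom (ZMod.ringHom_surjective _)
  have h : p.toAddMonoidHom.ker = (PadicInt.toZMod (p := 2)).toAddMonoidHom.ker := by
    ext x
    have h2 : x ∈ RingHom.ker (PadicInt.toZMod (p := 2)) ↔ ∃ y, x = 2 * y := by
      rw [PadicInt.ker_toZMod, PadicInt.maximalIdeal_eq_span_p, Ideal.mem_span_singleton]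
      rfl
    exact (hk x).trans h2.symm
  rw [Nat.card_congr ((e1.symm.trans (QuotientAddGroup.quotientAddEquivOfEq h)).trans e2).toEquiv]
  simp

section

variable {G : Type} [Group G]
variable {A B : Type} [AddCommGroup A] [Module ℤ_[2] A] [AddCommGroup B] [Module ℤ_[2] B]

/-- equivalent reps -/
noncomputable def HHcongr {ρ : Representation ℤ_[2] G A} {σ : Representation ℤ_[2] G B}
    (e : ρ.Equiv σ) (n : ℕ) : HH ρ n ≃ₗ[ℤ_[2]] HH σ n :=
  ((groupCohomology.functor ℤ_[2] G n).mapIso (Rep.mkIso e)).toLinearEquiv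

/-- Shapiro -/
noncomputable def shapiro {S : Subgroup G} (σ : Representation ℤ_[2] S A) (n : ℕ) :
    HH (coind S.subtype σ) n ≃ₗ[ℤ_[2]] HH σ n :=
  (groupCohomology.coindIso (Rep.of σ) n).toLinearEquiv

/-- change of groups -/
noncomputable def Hr {H : Type} [Group H] (f : H →* G) (ρ : Representation ℤ_[2] G A)
    (σ : Representation ℤ_[2] H B) (φ : A →ₗ[ℤ_[2]] B)
    (hφ : ∀ h a, φ (ρ (f h) a) = σ h (φ a)) (n : ℕ) : HH ρ n →ₗ[ℤ_[2]] HH σ n :=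
  (groupCohomology.map (A := Rep.of ρ) (B := Rep.of σ) f
    (Rep.ofHom ⟨φ, fun h => LinearMap.ext (hφ h)⟩) n).hom

lemma Hr_comp {H K C : Type} [Group H] [Group K] [AddCommGroup C] [Module ℤ_[2] C]
    (f : H →* G) (ρ : Representation ℤ_[2] G A)
    (σ : Representation ℤ_[2] H B) (φ : A →ₗ[ℤ_[2]] B)
    (hφ : ∀ h a, φ (ρ (f h) a) = σ h (φ a)) 
    (g : K →* H) (τ : Representation ℤ_[2] K C) (ψ : B →ₗ[ℤ_[2]] C)
    (hψ : ∀ h a, ψ (σ (g h) a) = τ h (ψ a)) (n : ℕ) (x : HH ρ n)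
    (f' : K →* G) (φ' : A →ₗ[ℤ_[2]] C) (hφ' : ∀ h a, φ' (ρ (f' h) a) = τ h (φ' a))
    (h1 : f' = f.comp g) (h2 : φ' = ψ ∘ₗ φ) :
    Hr g σ τ ψ hψ n (Hr f ρ σ φ hφ n x) = Hr f' ρ τ φ' hφ' n x := by
  subst h1 h2
  have := groupCohomology.map_comp (A := Rep.of ρ) (B := Rep.of σ) (C := Rep.of τ) f g
    (Rep.ofHom ⟨φ, fun h => LinearMap.ext (hφ h)⟩) (Rep.ofHom ⟨ψ, fun h => LinearMap.ext (hψ h)⟩) n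
  exact congr($(this).hom x).symm

lemma Hr_id (ρ : Representation ℤ_[2] G A) (n : ℕ) (x : HH ρ n) :
    Hr (MonoidHom.id G) ρ ρ LinearMap.id (fun _ _ => rfl) n x = x :=
  Hm_id n x

lemma Hm_eq_Hr {ρ : Representation ℤ_[2] G A} {σ : Representation ℤ_[2] G B}
    (f : ρ.IntertwiningMap σ) (n : ℕ) (x : HH ρ n) :
    Hm f n x = Hr (MonoidHom.id G) ρ σ f.toLinearMap (fun h a => congr($(f.2 h) a)) n x := rfl

end

section cyclic

variable {G : Type} [Group G] (g : G) (hg1 : g ≠ 1) (hg : ∀ x, x = 1 ∨ x = g)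

include hg1 hg

lemma gg : g * g = 1 := by
  rcases hg (g * g) with h | h
  · exact h
  · exact absurd (mul_eq_left.1 h) hg1

lemma cyc_aux (ρ : Representation ℤ_[2] G ℤ_[2]) (n : ℕ) (hn : 1 ≤ n) :
    (Even n → ∃ p : (LinearMap.ker (ρ g - LinearMap.id)) →ₗ[ℤ_[2]] HH ρ n,
      Function.Surjective p ∧ ∀ x, p x = 0 ↔ ∃ y, x.1 = y + ρ g y) ∧
    (Odd n → ∃ p : (LinearMap.ker (LinearMap.id + ρ g)) →ₗ[ℤ_[2]] HH ρ n,
      Function.Surjective p ∧ ∀ x, p x = 0 ↔ ∃ y, x.1 = ρ g y - y) := by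
  classical
  have hgg := gg g hg1 hg
  let _ : CommGroup G := { ‹Group G› with
    mul_comm := by
      intro a b
      rcases hg a with rfl | rfl <;> rcases hg b with rfl | rfl <;> simp }
  let _ : Fintype G := ⟨{1, g}, by intro x; rcases hg x with h | h <;> simp [h]⟩
  have hgen : ∀ x : G, x ∈ Subgroup.zpowers g := by
    intro x
    rcases hg x with rfl | rfl
    · exact one_mem _
    · exact Subgroup.mem_zpowers _
  have hnorm : ∀ y, (Rep.of ρ).norm.hom y = y + ρ g y := by
    intro y
    change ((Rep.of ρ).ρ.norm) y = _
    rw [Representation.norm, LinearMap.sum_apply]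
    change ∑ x ∈ {1, g}, _ = _
    rw [Finset.sum_pair hg1.symm]
    simp
  have hk1 : LinearMap.ker (Rep.applyAsHom (Rep.of ρ) g - 𝟙 (Rep.of ρ)).hom.toLinearMap =
      LinearMap.ker (ρ g - LinearMap.id) := rfl
  have hk2 : LinearMap.ker (Rep.of ρ).norm.hom.toLinearMap =
      LinearMap.ker (LinearMap.id + ρ g) := by
    ext x
    exact Eq.congr_left (hnorm x)
  have : NeZero n := ⟨by omega⟩
  constructor
  · intro he
    have hs : Function.Surjective (Rep.FiniteCyclicGroup.groupCohomologyπEven (Rep.of ρ) g hgen n he) :=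
      (ModuleCat.epi_iff_surjective _).1
        (epi_comp' (@IsIso.epi_of_iso _ _ _ _ _ (Iso.isIso_inv _)) (epi_comp' inferInstance inferInstance))
    refine ⟨(Rep.FiniteCyclicGroup.groupCohomologyπEven (Rep.of ρ) g hgen n he).hom, hs, ?_⟩
    intro x
    refine (Rep.FiniteCyclicGroup.groupCohomologyπEven_eq_zero_iff (Rep.of ρ) g hgen n he x).trans ?_
    constructor
    · rintro ⟨y, hy⟩; exact ⟨y, hy.symm.trans (hnorm y)⟩
    · rintro ⟨y, hy⟩; exact ⟨y, (hnorm y).trans hy.symm⟩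
  · intro he
    rw [← hk2]
    have hs : Function.Surjective (Rep.FiniteCyclicGroup.groupCohomologyπOdd (Rep.of ρ) g hgen n he) :=
      (ModuleCat.epi_iff_surjective _).1
        (epi_comp' (@IsIso.epi_of_iso _ _ _ _ _ (Iso.isIso_inv _)) (epi_comp' inferInstance inferInstance))
    refine ⟨(Rep.FiniteCyclicGroup.groupCohomologyπOdd (Rep.of ρ) g hgen n he).hom, hs, ?_⟩
    intro x
    refine (Rep.FiniteCyclicGroup.groupCohomologyπOdd_eq_zero_iff (Rep.of ρ) g hgen n he x).trans ?_
    constructor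
    · rintro ⟨y, hy⟩; exact ⟨y, hy.symm⟩
    · rintro ⟨y, hy⟩; exact ⟨y, hy.symm⟩

lemma cyc_same (ρ : Representation ℤ_[2] G ℤ_[2]) (n : ℕ) (hn : 1 ≤ n)
    (h : (Even n ∧ ∀ x, ρ g x = x) ∨ (Odd n ∧ ∀ x, ρ g x = - x)) : Nat.card (HH ρ n) = 2 := by
  rcases h with ⟨he, h⟩ | ⟨he, h⟩
  · obtain ⟨p, hs, hp⟩ := (cyc_aux g hg1 hg ρ n hn).1 he
    let c : ℤ_[2] →ₗ[ℤ_[2]] LinearMap.ker (ρ g - LinearMap.id) :=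
      LinearMap.id.codRestrict _ (by intro x; simp [h])
    apply card_two (p ∘ₗ c)
    · intro y
      obtain ⟨x, rfl⟩ := hs y
      exact ⟨x.1, rfl⟩
    · intro x
      refine (hp (c x)).trans ?_
      simp only [h, ← two_mul]
      rfl
  · obtain ⟨p, hs, hp⟩ := (cyc_aux g hg1 hg ρ n hn).2 he
    let c : ℤ_[2] →ₗ[ℤ_[2]] LinearMap.ker (LinearMap.id + ρ g) :=
      LinearMap.id.codRestrict _ (by intro x; simp [h])
    apply card_two (p ∘ₗ c)
    · intro y
      obtain ⟨x, rfl⟩ := hs y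
      exact ⟨x.1, rfl⟩
    · intro x
      refine (hp (c x)).trans ?_
      simp only [h]
      constructor
      · rintro ⟨y, hy⟩
        exact ⟨-y, by rw [show x = _ from hy]; ring⟩
      · rintro ⟨y, hy⟩
        exact ⟨-y, by rw [show (c x).1 = _ from hy]; ring⟩

lemma cyc_diff (ρ : Representation ℤ_[2] G ℤ_[2]) (n : ℕ) (hn : 1 ≤ n)
    (h : (Odd n ∧ ∀ x, ρ g x = x) ∨ (Even n ∧ ∀ x, ρ g x = - x)) : Nat.card (HH ρ n) = 1 := by
  rw [Nat.card_eq_one_iff_unique]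
  refine ⟨?_, ⟨0⟩⟩
  rcases h with ⟨he, h⟩ | ⟨he, h⟩
  · obtain ⟨p, hs, hp⟩ := (cyc_aux g hg1 hg ρ n hn).2 he
    have : Subsingleton (LinearMap.ker (LinearMap.id + ρ g)) := by
      refine subsingleton_of_forall_eq 0 ?_
      rintro ⟨x, hx⟩
      simpa [h, ← two_mul] using hx
    exact hs.subsingleton
  · obtain ⟨p, hs, hp⟩ := (cyc_aux g hg1 hg ρ n hn).1 he
    have : Subsingleton (LinearMap.ker (ρ g - LinearMap.id)) := by
      refine subsingleton_of_forall_eq 0 ?_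
      rintro ⟨x, hx⟩
      have : -x - x = 0 := by simpa [h] using hx
      have h2 : 2 * x = 0 := by linear_combination -this
      simpa using h2
    exact hs.subsingleton

end cyclic

end Layer2

section Layer3

lemma card_ses {A B C : Type} [AddCommGroup A] [Module ℤ_[2] A] [AddCommGroup B] [Module ℤ_[2] B]
    [AddCommGroup C] [Module ℤ_[2] C] (f : A →ₗ[ℤ_[2]] B) (g : B →ₗ[ℤ_[2]] C)
    (hf : Function.Injective f) (h : Function.Exact f g) (hg : Function.Surjective g) :
    Nat.card B = Nat.card A * Nat.card C := by
  rw [AddSubgroup.card_eq_card_quotient_mul_card_addSubgroup g.toAddMonoidHom.ker,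
    Nat.card_congr (QuotientAddGroup.quotientKerEquivOfSurjective g.toAddMonoidHom hg).toEquiv,
    mul_comm]
  congr 1
  symm
  apply Nat.card_congr
  refine Equiv.ofBijective (fun a => ⟨f a, (h (f a)).2 ⟨a, rfl⟩⟩) ⟨?_, ?_⟩
  · intro a b hab
    exact hf (congrArg Subtype.val hab)
  · rintro ⟨b, hb⟩
    obtain ⟨a, rfl⟩ := (h b).1 hb
    exact ⟨a, rfl⟩

/-- trivial rep -/
noncomputable abbrev tr (G : Type) [Group G] : Representation ℤ_[2] G ℤ_[2] :=
  Representation.trivial ℤ_[2] G ℤ_[2]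

/-- sign character rep -/
noncomputable def chi {G : Type} [Group G] (a : G →* ℤˣ) : Representation ℤ_[2] G ℤ_[2] where
  toFun v := (((a v : ℤˣ) : ℤ) : ℤ_[2]) • LinearMap.id
  map_one' := by ext; simp
  map_mul' x y := by ext; simp [mul_comm]

@[simp] lemma chi_apply {G : Type} [Group G] (a : G →* ℤˣ) (v : G) (z : ℤ_[2]) :
    chi a v z = (((a v : ℤˣ) : ℤ) : ℤ_[2]) * z := by
  simp [chi]

lemma pm (u : ℤˣ) : u = 1 ∨ u = -1 := Int.units_eq_one_or u

variable {V : Type} [Group V] (a : V →* ℤˣ)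

/-- induced module -/
noncomputable abbrev II : Representation ℤ_[2] V (coindV a.ker.subtype (tr a.ker)) :=
  coind a.ker.subtype (tr a.ker)

/-- constants -/
noncomputable def eta {G : Type} [Group G] (S : Subgroup G) :
    (tr G).IntertwiningMap (coind S.subtype (tr S)) where
  toLinearMap := 
    { toFun z := ⟨fun _ => z, fun _ _ => rfl⟩
      map_add' _ _ := rfl
      map_smul' _ _ := rfl }
  isIntertwining' g := by ext; rfl

variable (t : V) (ht : a t = -1)

lemma II1 (f : coindV a.ker.subtype (tr a.ker)) (x : V) (hx : a x = 1) : f.1 x = f.1 1 := by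
  have := f.2 ⟨x, hx⟩ 1
  simpa using this

include ht in
lemma II2 (f : coindV a.ker.subtype (tr a.ker)) (x : V) (hx : a x = -1) : f.1 x = f.1 t := by
  have := f.2 ⟨x * t⁻¹, by simp [MonoidHom.mem_ker, hx, ht]⟩ t
  simpa using this

/-- difference -/
noncomputable def qq : (II a).IntertwiningMap (chi a) where
  toLinearMap :=
    { toFun f := f.1 1 - f.1 t
      map_add' f g := by
        change (f.1 1 + g.1 1) - (f.1 t + g.1 t) = _
        ring
      map_smul' c f := by
        change (c * f.1 1) - (c * f.1 t) = c * _
        ring }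
  isIntertwining' g := by
    ext f
    change f.1 (1 * g) - f.1 (t * g) = chi a g (f.1 1 - f.1 t)
    rw [chi_apply]
    rcases pm (a g) with h | h
    · rw [II1 a f (1 * g) (by simp [h]), II2 a t ht f (t * g) (by simp [h, ht]), h]
      simp
    · rw [II2 a t ht f (1 * g) (by simp [h]), II1 a f (t * g) (by simp [h, ht]), h]
      simp

/-- sum -/
noncomputable def ss : (II a).IntertwiningMap (tr V) where
  toLinearMap :=
    { toFun f := f.1 1 + f.1 t
      map_add' f g := by
        change (f.1 1 + g.1 1) + (f.1 t + g.1 t) = _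
        ring
      map_smul' c f := by
        change (c * f.1 1) + (c * f.1 t) = c * _
        ring }
  isIntertwining' g := by
    ext f
    change f.1 (1 * g) + f.1 (t * g) = (f.1 1 + f.1 t)
    rcases pm (a g) with h | h
    · rw [II1 a f (1 * g) (by simp [h]), II2 a t ht f (t * g) (by simp [h, ht])]
    · rw [II2 a t ht f (1 * g) (by simp [h]), II1 a f (t * g) (by simp [h, ht]), add_comm]

/-- twisted constants -/
noncomputable def jj : (chi a).IntertwiningMap (II a) where
  toLinearMap := 
    { toFun z := ⟨fun x => (((a x : ℤˣ) : ℤ) : ℤ_[2]) * z, fun c x => by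
        have : a c.1 = 1 := c.2
        simp [this]⟩
      map_add' x y := by ext v; change _ * (x + y) = _ * x + _ * y; ring
      map_smul' c x := by ext v; change _ * (c * x) = c * (_ * x); ring }
  isIntertwining' g := by
    refine LinearMap.ext fun z => Subtype.ext (funext fun v => ?_)
    change (((a v : ℤˣ) : ℤ) : ℤ_[2]) * (chi a g z) = (((a (v * g) : ℤˣ) : ℤ) : ℤ_[2]) * z
    simp [mul_assoc]

/-- indicator of the kernel -/
noncomputable def ind : coindV a.ker.subtype (tr a.ker) := 
  ⟨fun x => if a x = 1 then 1 else 0, fun c x => by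
    have : a c.1 = 1 := c.2
    simp [this]⟩

lemma les1 : ∃ δ : ∀ n, HH (chi a) n →ₗ[ℤ_[2]] HH (tr V) (n + 1), ∀ n,
      Function.Exact (Hm (eta a.ker) n) (Hm (qq a t ht) n) ∧
      Function.Exact (Hm (qq a t ht) n) (δ n) ∧
      Function.Exact (δ n) (Hm (eta a.ker) (n + 1)) := by
  apply LES
  · intro x y hxy
    exact congrFun (congrArg Subtype.val hxy) 1
  · intro z
    refine ⟨z • ind a, ?_⟩
    change z * (if a 1 = 1 then 1 else 0) - z * (if a t = 1 then 1 else 0) = z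
    simp [ht]
  · intro f
    change f.1 1 - f.1 t = 0 ↔ _
    constructor
    · intro h
      refine ⟨f.1 1, ?_⟩
      apply Subtype.ext
      funext x
      change f.1 1 = f.1 x
      rcases pm (a x) with hx | hx
      · exact (II1 a f x hx).symm
      · rw [II2 a t ht f x hx]
        exact sub_eq_zero.1 h
    · rintro ⟨z, rfl⟩
      change z - z = 0
      simp

lemma les2 : ∃ δ : ∀ n, HH (tr V) n →ₗ[ℤ_[2]] HH (chi a) (n + 1), ∀ n,
      Function.Exact (Hm (jj a) n) (Hm (ss a t ht) n) ∧
      Function.Exact (Hm (ss a t ht) n) (δ n) ∧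
      Function.Exact (δ n) (Hm (jj a) (n + 1)) := by
  apply LES
  · intro x y hxy
    have := congrFun (congrArg Subtype.val hxy) 1
    change (((a 1 : ℤˣ) : ℤ) : ℤ_[2]) * x = (((a 1 : ℤˣ) : ℤ) : ℤ_[2]) * y at this
    simpa using this
  · intro z
    refine ⟨z • ind a, ?_⟩
    change z * (if a 1 = 1 then 1 else 0) + z * (if a t = 1 then 1 else 0) = z
    simp [ht]
  · intro f
    change f.1 1 + f.1 t = 0 ↔ _
    constructor
    · intro h
      refine ⟨f.1 1, ?_⟩
      apply Subtype.ext
      funext x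
      change (((a x : ℤˣ) : ℤ) : ℤ_[2]) * f.1 1 = f.1 x
      rcases pm (a x) with hx | hx
      · rw [II1 a f x hx, hx]; simp
      · rw [II2 a t ht f x hx, hx]
        push_cast
        linear_combination -h
    · rintro ⟨z, rfl⟩
      change (((a 1 : ℤˣ) : ℤ) : ℤ_[2]) * z + (((a t : ℤˣ) : ℤ) : ℤ_[2]) * z = 0
      simp [ht]

lemma Hm_ss_eta (n : ℕ) (x : HH (tr V) n) :
    Hm (ss a t ht) n (Hm (eta a.ker) n x) = x + x := by
  rw [← Hm_comp]
  have : (ss a t ht).comp (eta a.ker) = IntertwiningMap.id _ + IntertwiningMap.id _ := by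
    ext
    rfl
  rw [this, Hm_add, Hm_id]

variable (g : a.ker) (hg1 : g ≠ 1) (hg : ∀ x, x = 1 ∨ x = g)
variable (r : V →* a.ker) (hr : ∀ c : a.ker, r c = c)

include hg1 hg in
lemma cardC_even (n : ℕ) (hn : 1 ≤ n) (he : Even n) : Nat.card (HH (tr a.ker) n) = 2 :=
  cyc_same g hg1 hg _ n hn (Or.inl ⟨he, fun _ => rfl⟩)

include hg1 hg in
lemma cardC_odd (n : ℕ) (he : Odd n) : Nat.card (HH (tr a.ker) n) = 1 :=
  cyc_diff g hg1 hg _ n he.pos (Or.inl ⟨he, fun _ => rfl⟩)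

lemma cardI (n : ℕ) : Nat.card (HH (II a) n) = Nat.card (HH (tr a.ker) n) :=
  Nat.card_congr (shapiro (tr a.ker) n).toEquiv

/-- restriction -/
noncomputable def RR (n : ℕ) : HH (tr V) n →ₗ[ℤ_[2]] HH (tr a.ker) n :=
  Hr a.ker.subtype _ _ LinearMap.id (fun _ _ => rfl) n

/-- inflation -/
noncomputable def inf (n : ℕ) : HH (tr a.ker) n →ₗ[ℤ_[2]] HH (tr V) n :=
  Hr r _ _ LinearMap.id (fun _ _ => rfl) n

/-- explicit Shapiro map -/
noncomputable def sh (n : ℕ) : HH (II a) n →ₗ[ℤ_[2]] HH (tr a.ker) n :=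
  Hr a.ker.subtype _ _ (LinearMap.proj 1 ∘ₗ Submodule.subtype _) (fun h f => by
    change f.1 (1 * h) = f.1 1
    exact II1 a f _ (by rw [one_mul]; exact h.2)) n

include hr in
lemma RR_inf (n : ℕ) (x : HH (tr a.ker) n) : RR a n (inf a r n x) = x := by
  have h1 : MonoidHom.id a.ker = r.comp a.ker.subtype := by
    refine MonoidHom.ext fun c => ?_
    simp [hr]
  exact (Hr_comp r (tr a.ker) (tr V) LinearMap.id (fun _ _ => rfl) a.ker.subtype (tr a.ker)
    LinearMap.id (fun _ _ => rfl) n x (MonoidHom.id _) LinearMap.id (fun _ _ => rfl) h1 rfl).trans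
    (Hr_id _ n x)

lemma sh_eta (n : ℕ) (x : HH (tr V) n) : sh a n (Hm (eta a.ker) n x) = RR a n x := by
  rw [Hm_eq_Hr]
  unfold sh RR
  apply Hr_comp
  · rfl
  · rfl

include hg1 hg in
lemma cardC_pos (n : ℕ) (hn : 1 ≤ n) : Nat.card (HH (tr a.ker) n) ∣ 2 := by
  rcases Nat.even_or_odd n with h | h
  · rw [cardC_even a g hg1 hg n hn h]
  · rw [cardC_odd a g hg1 hg n h]; simp

include hg1 hg hr in
lemma sh_inj (n : ℕ) (hn : 1 ≤ n) : Function.Injective (sh a n) := by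
  have hs : Function.Surjective (sh a n) := fun y =>
    ⟨Hm (eta a.ker) n (inf a r n y), by rw [sh_eta, RR_inf a r hr]⟩
  have h0 : Nat.card (HH (tr a.ker) n) ≠ 0 := by
    intro h
    have := cardC_pos a g hg1 hg n hn
    rw [h] at this
    simp at this
  have : Finite (HH (II a) n) := Nat.finite_of_card_ne_zero (by rw [cardI]; exact h0)
  exact ((Nat.bijective_iff_surjective_and_card _).2 ⟨hs, cardI a n⟩).1

include hg1 hg hr in
lemma eta_surj (n : ℕ) (hn : 1 ≤ n) : Function.Surjective (Hm (eta a.ker) n) := by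
  intro y
  refine ⟨inf a r n (sh a n y), sh_inj a g hg1 hg r hr n hn ?_⟩
  rw [sh_eta, RR_inf a r hr]

include hg1 hg hr ht in
lemma V_two (n : ℕ) (hn : 1 ≤ n) (x : HH (tr V) n) : x + x = 0 := by
  have h1 : ∀ y : HH (tr a.ker) n, y + y = 0 := by
    intro y
    obtain ⟨c, hc⟩ := cardC_pos a g hg1 hg n hn
    have : Nat.card (HH (tr a.ker) n) • y = 0 := card_nsmul_eq_zero'
    have h3 : (Nat.card (HH (tr a.ker) n) * c) • y = 0 := by
      rw [mul_comm, mul_nsmul', this, nsmul_zero]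
    have h4 : ∀ m : ℕ, 2 = m → m • y = 0 → y + y = 0 := by
      rintro m rfl hm
      rwa [← two_nsmul]
    exact h4 _ hc h3
  have h2 : Hm (eta a.ker) n (x - inf a r n (RR a n x)) = 0 := by
    apply sh_inj a g hg1 hg r hr n hn
    rw [sh_eta, map_sub, RR_inf a r hr, sub_self, map_zero]
  have h3 := Hm_ss_eta a t ht n (x - inf a r n (RR a n x))
  rw [h2, map_zero] at h3
  have h4 : inf a r n (RR a n x) + inf a r n (RR a n x) = 0 := by
    rw [← map_add, h1, map_zero]
  calc x + x = (x - inf a r n (RR a n x) + (x - inf a r n (RR a n x))) +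
      (inf a r n (RR a n x) + inf a r n (RR a n x)) := by abel
    _ = 0 := by rw [← h3, h4, add_zero]

include hg1 hg hr ht in
lemma rec1 (n : ℕ) (hn : 1 ≤ n) :
    Nat.card (HH (tr V) (n + 1)) = Nat.card (HH (chi a) n) * Nat.card (HH (tr a.ker) (n + 1)) := by
  obtain ⟨δ, hδ⟩ := les1 a t ht
  rw [← cardI]
  apply card_ses (δ n) (Hm (eta a.ker) (n + 1))
  · rw [injective_iff_map_eq_zero]
    intro y hy
    obtain ⟨z, rfl⟩ := ((hδ n).2.1 y).1 hy
    obtain ⟨w, rfl⟩ := eta_surj a g hg1 hg r hr n hn z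
    exact ((hδ n).1 _).2 ⟨w, rfl⟩
  · exact (hδ n).2.2
  · exact eta_surj a g hg1 hg r hr _ (by omega)

include hg1 hg hr in
lemma ss_zero (n : ℕ) (hn : 1 ≤ n) (y) : Hm (ss a t ht) n y = 0 := by
  obtain ⟨w, rfl⟩ := eta_surj a g hg1 hg r hr n hn y
  rw [Hm_ss_eta]
  exact V_two a t ht g hg1 hg r hr n hn w

include hg1 hg hr ht in
lemma rec2 (n : ℕ) (hn : 1 ≤ n) :
    Nat.card (HH (chi a) (n + 1)) = Nat.card (HH (tr V) n) * Nat.card (HH (tr a.ker) (n + 1)) := by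
  obtain ⟨δ, hδ⟩ := les2 a t ht
  rw [← cardI]
  apply card_ses (δ n) (Hm (jj a) (n + 1))
  · rw [injective_iff_map_eq_zero]
    intro y hy
    obtain ⟨z, rfl⟩ := ((hδ n).2.1 y).1 hy
    exact ss_zero a t ht g hg1 hg r hr n hn z
  · exact (hδ n).2.2
  · intro y
    exact ((hδ (n + 1)).1 y).1 (ss_zero a t ht g hg1 hg r hr _ (by omega) y)

include ht in
lemma chi0 : Subsingleton (HH (chi a) 0) := by
  have e := (groupCohomology.H0Iso (Rep.of (chi a))).toLinearEquiv
  have : Subsingleton (Rep.of (chi a)).ρ.invariants := by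
    refine subsingleton_of_forall_eq 0 ?_
    rintro ⟨x, hx⟩
    have h := hx t
    change chi a t x = x at h
    simp only [chi_apply, ht] at h
    push_cast at h
    have h2 : 2 * x = 0 := by linear_combination -h
    simpa using h2
  exact e.toEquiv.subsingleton

/-- degree zero -/
noncomputable def e0 (G : Type) [Group G] : HH (tr G) 0 ≃ₗ[ℤ_[2]] ℤ_[2] :=
  (groupCohomology.H0IsoOfIsTrivial (Rep.of (tr G))).toLinearEquiv

include hg1 hg ht in
lemma chi1 : Nat.card (HH (chi a) 1) = 2 := by
  obtain ⟨δ, hδ⟩ := les2 a t ht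
  obtain ⟨δ', hδ'⟩ := les1 a t ht
  have := chi0 a t ht
  apply card_two (δ 0 ∘ₗ (e0 V).symm.toLinearMap)
  · have h1 : Nat.card (HH (II a) 1) = 1 := by rw [cardI, cardC_odd a g hg1 hg 1 (by decide)]
    have := (Nat.card_eq_one_iff_unique.1 h1).1
    intro y
    obtain ⟨z, rfl⟩ := ((hδ 0).2.2 y).1 (Subsingleton.elim _ _)
    exact ⟨e0 V z, by simp⟩
  · intro x
    refine ((hδ 0).2.1 _).trans ?_
    constructor
    · rintro ⟨u, hu⟩
      obtain ⟨w, rfl⟩ := ((hδ' 0).1 u).1 (Subsingleton.elim _ _)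
      rw [Hm_ss_eta] at hu
      refine ⟨e0 V w, ?_⟩
      have := congrArg (e0 V) hu
      simp only [map_add, LinearEquiv.coe_coe, LinearEquiv.apply_symm_apply] at this
      rw [← this, two_mul]
    · rintro ⟨y, rfl⟩
      refine ⟨Hm (eta a.ker) 0 ((e0 V).symm y), ?_⟩
      rw [Hm_ss_eta, two_mul, map_add]
      rfl

include hg1 hg ht in
lemma tr1 : Nat.card (HH (tr V) 1) = 1 := by
  obtain ⟨δ', hδ'⟩ := les1 a t ht
  have := chi0 a t ht
  have h1 : Nat.card (HH (II a) 1) = 1 := by rw [cardI, cardC_odd a g hg1 hg 1 (by decide)]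
  have := (Nat.card_eq_one_iff_unique.1 h1).1
  rw [Nat.card_eq_one_iff_unique]
  refine ⟨subsingleton_of_forall_eq 0 fun y => ?_, ⟨0⟩⟩
  obtain ⟨z, rfl⟩ := ((hδ' 0).2.2 y).1 (Subsingleton.elim _ _)
  rw [Subsingleton.elim z 0, map_zero]

include hg1 hg hr ht in
theorem V_card (k : ℕ) : Nat.card (HH (tr V) (2 * k + 1)) = 2 ^ k ∧
    Nat.card (HH (tr V) (2 * k + 2)) = 2 ^ (k + 2) := by
  induction k with
  | zero =>
    refine ⟨tr1 a t ht g hg1 hg, ?_⟩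
    rw [rec1 a t ht g hg1 hg r hr 1 le_rfl, chi1 a t ht g hg1 hg,
      cardC_even a g hg1 hg 2 (by omega) (by decide)]
    rfl
  | succ k ih =>
    have h2 : ∀ n, 1 ≤ n → Nat.card (HH (tr V) (n + 2)) = 2 * Nat.card (HH (tr V) n) := by
      intro n hn
      rw [rec1 a t ht g hg1 hg r hr (n + 1) (by omega), rec2 a t ht g hg1 hg r hr n hn]
      rcases Nat.even_or_odd n with h | h
      · rw [cardC_odd a g hg1 hg (n + 1) h.add_one,
          cardC_even a g hg1 hg (n + 1 + 1) (by omega) h.add_one.add_one]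
        ring
      · rw [cardC_even a g hg1 hg (n + 1) (by omega) h.add_one,
          cardC_odd a g hg1 hg (n + 1 + 1) h.add_one.add_one]
        ring
    constructor
    · rw [show 2 * (k + 1) + 1 = (2 * k + 1) + 2 by ring, h2 _ (by omega), ih.1]; ring
    · rw [show 2 * (k + 1) + 2 = (2 * k + 2) + 2 by ring, h2 _ (by omega), ih.2]; ring

end Layer3

section Layer4

lemma three_inj {A : Type} [AddCommGroup A] [Module ℤ_[2] A] (x : A) (h : x + x + x = 0) : x = 0 := by
  have hu : IsUnit (3 : ℤ_[2]) := by
    rw [PadicInt.isUnit_iff]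
    have := (PadicInt.norm_int_lt_one_iff_dvd (p := 2) 3).not.2 (by norm_num)
    exact le_antisymm (PadicInt.norm_le_one _) (not_lt.1 (by simpa using this))
  obtain ⟨u, hu⟩ := hu
  have h3 : (u : ℤ_[2]) • x = 0 := by
    rw [hu, ← h, show (3 : ℤ_[2]) = 1 + 1 + 1 by norm_num, add_smul, add_smul, one_smul]
  have h4 := congrArg (fun y => (↑u⁻¹ : ℤ_[2]) • y) h3
  simpa [smul_smul] using h4

variable {G : Type} [Group G] (S : Subgroup G) [hS : S.Normal] (c : G)
  (hc : c * c * c = 1) (hrep : ∀ g : G, ∃ s ∈ S, g = s ∨ g = s * c ∨ g = s * c * c)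

lemma coind_left (f : coindV S.subtype (tr S)) (s x : G) (hs : s ∈ S) : f.1 (s * x) = f.1 x :=
  f.2 ⟨s, hs⟩ x

lemma coind_mid (f : coindV S.subtype (tr S)) (s x : G) (hs : s ∈ S) :
    f.1 (c * (s * x)) = f.1 (c * x) := by
  have := coind_left S f (c * s * c⁻¹) (c * x) (hS.conj_mem s hs c)
  rw [← this]
  group

/-- left translation by `c` -/
noncomputable def sg : (coind S.subtype (tr S)).IntertwiningMap (coind S.subtype (tr S)) where
  toLinearMap :=
    { toFun f := ⟨fun x => f.1 (c * x), fun s x => coind_mid S c f s.1 x s.2⟩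
      map_add' _ _ := rfl
      map_smul' _ _ := rfl }
  isIntertwining' g := by
    refine LinearMap.ext fun f => Subtype.ext (funext fun v => ?_)
    change f.1 (c * v * g) = f.1 (c * (v * g))
    rw [mul_assoc]

include hc hrep in
lemma sum_const (f : coindV S.subtype (tr S)) (x : G) :
    f.1 x + f.1 (c * x) + f.1 (c * (c * x)) = f.1 1 + f.1 c + f.1 (c * c) := by
  obtain ⟨s, hs, h⟩ := hrep x
  have h1 := fun y => coind_left S f s y hs
  have h2 := fun y => coind_mid S c f s y hs
  have h3 : ∀ y, f.1 (c * (c * (s * y))) = f.1 (c * (c * y)) := fun y => by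
    exact coind_mid S c (sg S c f) s y hs
  have h4 : ∀ y, c * (c * (c * y)) = y := fun y => by
    rw [← mul_assoc, ← mul_assoc, hc, one_mul]
  have h5 : c * (c * c) = 1 := by rw [← mul_assoc, hc]
  rcases h with rfl | rfl | rfl
  · have e1 := h1 1
    have e2 := h2 1
    have e3 := h3 1
    simp only [mul_one] at e1 e2 e3
    rw [e1, e2, e3]
  · rw [h1, h2, h3, h5]; ring
  · simp only [mul_assoc]
    rw [h1, h2, h3, h4, h5]; ring

/-- transfer -/
noncomputable def pp : (coind S.subtype (tr S)).IntertwiningMap (tr G) where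
  toLinearMap :=
    { toFun f := f.1 1 + f.1 c + f.1 (c * c)
      map_add' f g := by
        change (f.1 1 + g.1 1) + (f.1 c + g.1 c) + (f.1 (c * c) + g.1 (c * c)) = _
        ring
      map_smul' z f := by
        change (z * f.1 1) + (z * f.1 c) + z * f.1 (c * c) = z * _
        ring }
  isIntertwining' g := by
    refine LinearMap.ext fun f => ?_
    change f.1 (1 * g) + f.1 (c * g) + f.1 (c * c * g) = f.1 1 + f.1 c + f.1 (c * c)
    rw [one_mul, mul_assoc]
    exact sum_const S c hc hrep f g

lemma pp_eta (n : ℕ) (x : HH (tr G) n) :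
    Hm (pp S c hc hrep) n (Hm (eta S) n x) = x + x + x := by
  rw [← Hm_comp]
  have : (pp S c hc hrep).comp (eta S) =
      IntertwiningMap.id _ + IntertwiningMap.id _ + IntertwiningMap.id _ := by
    ext
    rfl
  rw [this, Hm_add, Hm_add, Hm_id]

lemma eta_pp (n : ℕ) (x : HH (coind S.subtype (tr S)) n) :
    Hm (eta S) n (Hm (pp S c hc hrep) n x) = x + Hm (sg S c) n x +
      Hm (sg S c) n (Hm (sg S c) n x) := by
  rw [← Hm_comp, ← Hm_comp]
  have : (eta S).comp (pp S c hc hrep) =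
      IntertwiningMap.id _ + sg S c + (sg S c).comp (sg S c) := by
    apply IntertwiningMap.ext
    refine LinearMap.ext fun f => ?_
    apply Subtype.ext
    funext x
    exact (sum_const S c hc hrep f x).symm
  rw [this, Hm_add, Hm_add, Hm_id]

lemma sg_eta (n : ℕ) (x : HH (tr G) n) : Hm (sg S c) n (Hm (eta S) n x) = Hm (eta S) n x := by
  rw [← Hm_comp]
  rfl

include hc in
lemma sg3 (n : ℕ) (x : HH (coind S.subtype (tr S)) n) :
    Hm (sg S c) n (Hm (sg S c) n (Hm (sg S c) n x)) = x := by
  rw [← Hm_comp, ← Hm_comp]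
  have : (sg S c).comp ((sg S c).comp (sg S c)) = IntertwiningMap.id _ := by
    apply IntertwiningMap.ext
    refine LinearMap.ext fun f => ?_
    apply Subtype.ext
    funext x
    change f.1 (c * (c * (c * x))) = f.1 x
    rw [← mul_assoc, ← mul_assoc, hc, one_mul]
  have h2 := congr(Hm $this n x)
  rw [Hm_id] at h2
  exact h2

include hc hrep in
lemma eta_inj (n : ℕ) : Function.Injective (Hm (eta S) n) := by
  rw [injective_iff_map_eq_zero]
  intro x hx
  apply three_inj
  rw [← pp_eta S c hc hrep, hx, map_zero]

include hc hrep in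
lemma G_two (n : ℕ) (h2 : ∀ y : HH (tr S) n, y + y = 0) (x : HH (tr G) n) : x + x = 0 := by
  apply eta_inj S c hc hrep n
  apply (shapiro (tr S) n).injective
  rw [map_add, map_add, h2, map_zero, map_zero]

include hc hrep in
lemma G_fin (n : ℕ) (hf : Finite (HH (tr S) n)) : Finite (HH (tr G) n) := by
  have : Finite (HH (coind S.subtype (tr S)) n) := Finite.of_equiv _ (shapiro (tr S) n).symm.toEquiv
  exact Finite.of_injective _ (eta_inj S c hc hrep n)

include hc hrep in
lemma G_mod (n : ℕ) (h2 : ∀ y : HH (tr S) n, y + y = 0) (hf : Finite (HH (tr S) n)) :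
    Nat.card (HH (tr S) n) ≡ Nat.card (HH (tr G) n) [MOD 3] := by
  classical
  have : Finite (HH (coind S.subtype (tr S)) n) := Finite.of_equiv _ (shapiro (tr S) n).symm.toEquiv
  have h2' : ∀ y : HH (coind S.subtype (tr S)) n, y + y = 0 := fun y => by
    apply (shapiro (tr S) n).injective
    rw [map_add, h2, map_zero]
  have := Fintype.ofFinite (HH (coind S.subtype (tr S)) n)
  let T : Function.End (HH (coind S.subtype (tr S)) n) := fun x => Hm (sg S c) n x
  have hT : T ^ 3 ^ 1 = 1 := by
    funext x
    exact sg3 S c hc n x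
  have key := Equiv.Perm.card_fixedPoints_modEq (p := 3) (n := 1) hT
  rw [← Nat.card_congr (shapiro (tr S) n).toEquiv, Nat.card_eq_fintype_card]
  refine key.trans ?_
  rw [← Nat.card_eq_fintype_card]
  have : Nat.card (Function.fixedPoints T) = Nat.card (HH (tr G) n) := by
    symm
    apply Nat.card_congr
    refine Equiv.ofBijective (fun x => ⟨Hm (eta S) n x, sg_eta S c n x⟩) ⟨?_, ?_⟩
    · intro x y hxy
      exact eta_inj S c hc hrep n (congrArg Subtype.val hxy)
    · rintro ⟨y, hy⟩
      refine ⟨Hm (pp S c hc hrep) n y, Subtype.ext ?_⟩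
      have hy' : Hm (sg S c) n y = y := hy
      change Hm (eta S) n (Hm (pp S c hc hrep) n y) = y
      rw [eta_pp, hy', hy', h2', zero_add]
  rw [this]

end Layer4

section Layer5

/-- the Klein four subgroup -/
def SV : Subgroup A4 where
  carrier := {x | x * x = 1}
  one_mem' := by simp
  mul_mem' := by
    have : ∀ x y : A4, x * x = 1 → y * y = 1 → (x * y) * (x * y) = 1 := by decide +kernel
    exact fun {x y} hx hy => this x y hx hy
  inv_mem' := by
    have : ∀ x : A4, x * x = 1 → x⁻¹ * x⁻¹ = 1 := by decide +kernel
    exact fun {x} hx => this x hx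

lemma mem_SV (x : A4) : x ∈ SV ↔ x * x = 1 := Iff.rfl

instance (x : A4) : Decidable (x ∈ SV) := decidable_of_iff _ (mem_SV x).symm

instance : SV.Normal where
  conj_mem := by
    have : ∀ x : A4, x * x = 1 → ∀ g : A4, (g * x * g⁻¹) * (g * x * g⁻¹) = 1 := by decide +kernel
    exact this

/-- a 3-cycle -/
def c3 : A4 := ⟨Equiv.swap 0 1 * Equiv.swap 1 2, by
  rw [Equiv.Perm.mem_alternatingGroup]; decide +kernel⟩

/-- double transposition -/
def g01 : A4 := ⟨Equiv.swap 0 1 * Equiv.swap 2 3, by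
  rw [Equiv.Perm.mem_alternatingGroup]; decide +kernel⟩

/-- double transposition -/
def g02 : A4 := ⟨Equiv.swap 0 2 * Equiv.swap 1 3, by
  rw [Equiv.Perm.mem_alternatingGroup]; decide +kernel⟩

lemma c3_cube : c3 * c3 * c3 = 1 := by decide +kernel

lemma c3_rep : ∀ g : A4, ∃ s ∈ SV, g = s ∨ g = s * c3 ∨ g = s * c3 * c3 := by
  have : ∀ g : A4, ∃ s : A4, s * s = 1 ∧ (g = s ∨ g = s * c3 ∨ g = s * c3 * c3) := by decide +kernel
  exact this

/-- character -/
def aV : SV →* ℤˣ where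
  toFun x := if x.1.1 0 = 0 ∨ x.1.1 0 = 1 then 1 else -1
  map_one' := by simp
  map_mul' := by decide +kernel

/-- kernel generator -/
def gV : aV.ker := ⟨⟨g01, by decide +kernel⟩, by
  change aV _ = 1; decide +kernel⟩

/-- outside the kernel -/
def tV : SV := ⟨g02, by decide +kernel⟩

lemma tV_spec : aV tV = -1 := by decide +kernel

instance : DecidablePred (· ∈ aV.ker) := fun x => inferInstanceAs (Decidable (aV x = 1))

lemma gV1 : gV ≠ 1 := by decide +kernel
lemma gV2 : ∀ x, x = 1 ∨ x = gV := by decide +kernel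

/-- retraction -/
def rV : SV →* aV.ker where
  toFun x := if x.1.1 0 = 0 ∨ x.1.1 0 = 2 then 1 else gV
  map_one' := by simp
  map_mul' := by decide +kernel

lemma rV_spec : ∀ c : aV.ker, rV c = c := by decide +kernel

lemma S_card (k : ℕ) : Nat.card (HH (tr SV) (2 * k + 1)) = 2 ^ k ∧
    Nat.card (HH (tr SV) (2 * k + 2)) = 2 ^ (k + 2) :=
  V_card aV tV tV_spec gV gV1 gV2 rV rV_spec k

lemma S_fin (n : ℕ) (hn : 1 ≤ n) : Finite (HH (tr SV) n) := by
  apply Nat.finite_of_card_ne_zero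
  obtain ⟨k, rfl | rfl⟩ : ∃ k, n = 2 * k + 1 ∨ n = 2 * k + 2 := ⟨(n - 1) / 2, by omega⟩
  · rw [(S_card k).1]; positivity
  · rw [(S_card k).2]; positivity

lemma A_two (n : ℕ) (hn : 1 ≤ n) (x : HH (tr A4) n) : x + x = 0 :=
  G_two SV c3 c3_cube c3_rep n (V_two aV tV tV_spec gV gV1 gV2 rV rV_spec n hn) x

lemma A_fin (n : ℕ) (hn : 1 ≤ n) : Finite (HH (tr A4) n) :=
  G_fin SV c3 c3_cube c3_rep n (S_fin n hn)

lemma A_mod (n : ℕ) (hn : 1 ≤ n) : Nat.card (HH (tr SV) n) ≡ Nat.card (HH (tr A4) n) [MOD 3] :=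
  G_mod SV c3 c3_cube c3_rep n (V_two aV tV tV_spec gV gV1 gV2 rV rV_spec n hn) (S_fin n hn)

lemma A_mod1 (k : ℕ) : 2 ^ k ≡ Nat.card (HH (tr A4) (2 * k + 1)) [MOD 3] := by
  rw [← (S_card k).1]; exact A_mod _ (by omega)

lemma A_mod2 (k : ℕ) : 2 ^ (k + 2) ≡ Nat.card (HH (tr A4) (2 * k + 2)) [MOD 3] := by
  rw [← (S_card k).2]; exact A_mod _ (by omega)

lemma A_one : Nat.card (HH (tr A4) 1) = 1 := by
  have h1 := (S_card 0).1
  rw [Nat.card_eq_one_iff_unique]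
  have := (Nat.card_eq_one_iff_unique.1 h1).1
  have : Subsingleton (HH (coind SV.subtype (tr SV)) 1) := (shapiro (tr SV) 1).toEquiv.subsingleton
  exact ⟨(eta_inj SV c3 c3_cube c3_rep 1).subsingleton, ⟨0⟩⟩

end Layer5

section Layer6

/-- permutation rep -/
noncomputable def PP : Representation ℤ_[2] A4 (Fin 4 → ℤ_[2]) where
  toFun g :=
    { toFun f i := f ((g⁻¹).1 i)
      map_add' _ _ := rfl
      map_smul' _ _ := rfl }
  map_one' := rfl
  map_mul' x y := by
    refine LinearMap.ext fun f => funext fun i => ?_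
    change f (((x * y)⁻¹).1 i) = f ((y⁻¹).1 ((x⁻¹).1 i))
    rw [mul_inv_rev]
    rfl

/-- antisymmetric functions -/
def MMsub : Submodule ℤ_[2] (Fin 4 → Fin 4 → ℤ_[2]) where
  carrier := {m | ∀ i j, m i j = - m j i}
  zero_mem' := by intro i j; simp
  add_mem' := by
    intro a b ha hb i j
    change a i j + b i j = - (a j i + b j i)
    rw [ha i j, hb i j]; ring
  smul_mem' := by
    intro c a ha i j
    change c * a i j = - (c * a j i)
    rw [ha i j]; ring

/-- rep on antisymmetric functions -/
noncomputable def MM : Representation ℤ_[2] A4 MMsub where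
  toFun g :=
    { toFun f := ⟨fun i j => f.1 ((g⁻¹).1 i) ((g⁻¹).1 j), fun i j => f.2 _ _⟩
      map_add' _ _ := rfl
      map_smul' _ _ := rfl }
  map_one' := rfl
  map_mul' x y := by
    refine LinearMap.ext fun f => Subtype.ext (funext fun i => funext fun j => ?_)
    change f.1 (((x * y)⁻¹).1 i) (((x * y)⁻¹).1 j) =
      f.1 ((y⁻¹).1 ((x⁻¹).1 i)) ((y⁻¹).1 ((x⁻¹).1 j))
    rw [mul_inv_rev]
    rfl

/-- all functions on the group -/
noncomputable abbrev EE : Representation ℤ_[2] A4 (coindV (⊥ : Subgroup A4).subtype (tr (⊥ : Subgroup A4))) :=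
  coind (⊥ : Subgroup A4).subtype (tr (⊥ : Subgroup A4))

lemma EE_zero (n : ℕ) (hn : 1 ≤ n) : Subsingleton (HH EE n) := by
  obtain ⟨n, rfl⟩ := Nat.exists_eq_succ_of_ne_zero (by omega : n ≠ 0)
  have h := isZero_groupCohomology_succ_of_subsingleton (Rep.of (tr (⊥ : Subgroup A4))) n
  have : Subsingleton (HH (tr (⊥ : Subgroup A4)) (n + 1)) := ModuleCat.subsingleton_of_isZero h
  exact (shapiro (tr (⊥ : Subgroup A4)) (n + 1)).toEquiv.subsingleton

/-- embedding -/
noncomputable def PtoE : PP.IntertwiningMap EE where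
  toLinearMap :=
    { toFun f := ⟨fun x => f ((x⁻¹).1 0), fun s x => by
        have : s = 1 := Subsingleton.elim _ _
        subst this
        simp⟩
      map_add' _ _ := rfl
      map_smul' _ _ := rfl }
  isIntertwining' g := by
    refine LinearMap.ext fun f => Subtype.ext (funext fun x => ?_)
    change f ((g⁻¹).1 ((x⁻¹).1 0)) = f (((x * g)⁻¹).1 0)
    rw [mul_inv_rev]
    rfl

/-- averaging -/
noncomputable def EtoP : EE.IntertwiningMap PP where
  toLinearMap :=
    { toFun F i := ∑ x : A4, if (x⁻¹).1 0 = i then F.1 x else 0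
      map_add' F F' := by
        funext i
        change _ = (∑ x : A4, if (x⁻¹).1 0 = i then F.1 x else 0) +
          ∑ x : A4, if (x⁻¹).1 0 = i then F'.1 x else 0
        rw [← Finset.sum_add_distrib]
        refine Finset.sum_congr rfl fun x _ => ?_
        split_ifs
        · rfl
        · simp
      map_smul' c F := by
        funext i
        change _ = c * (∑ x : A4, if (x⁻¹).1 0 = i then F.1 x else 0)
        rw [Finset.mul_sum]
        refine Finset.sum_congr rfl fun x _ => ?_
        split_ifs
        · rfl
        · simp }
  isIntertwining' g := by
    refine LinearMap.ext fun F => funext fun i => ?_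
    change (∑ x : A4, if (x⁻¹).1 0 = i then F.1 (x * g) else 0) =
      ∑ x : A4, if (x⁻¹).1 0 = (g⁻¹).1 i then F.1 x else 0
    refine Fintype.sum_equiv (Equiv.mulRight g) _ _ fun x => ?_
    have : ((Equiv.mulRight g x)⁻¹).1 0 = (g⁻¹).1 ((x⁻¹).1 0) := by
      rw [Equiv.coe_mulRight, mul_inv_rev]
      rfl
    rw [this]
    simp only [EmbeddingLike.apply_eq_iff_eq]
    rfl

lemma count3 : ∀ i : Fin 4, (Finset.univ.filter fun x : A4 => (x⁻¹).1 0 = i).card = 3 := by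
  decide +kernel

lemma PP_zero (n : ℕ) (hn : 1 ≤ n) : Subsingleton (HH PP n) := by
  refine subsingleton_of_forall_eq 0 fun y => ?_
  apply three_inj
  have h := EE_zero n hn
  have h1 : EtoP.comp PtoE = IntertwiningMap.id _ + IntertwiningMap.id _ + IntertwiningMap.id _ := by
    apply IntertwiningMap.ext
    refine LinearMap.ext fun f => funext fun i => ?_
    change (∑ x : A4, if (x⁻¹).1 0 = i then f ((x⁻¹).1 0) else 0) = f i + f i + f i
    have : ∀ x : A4, (if (x⁻¹).1 0 = i then f ((x⁻¹).1 0) else 0) =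
        if (x⁻¹).1 0 = i then f i else 0 := by
      intro x
      split_ifs with h
      · rw [h]
      · rfl
    simp only [this]
    rw [← Finset.sum_filter, Finset.sum_const, count3]
    simp only [nsmul_eq_mul]
    push_cast
    ring
  have h2 := Hm_comp PtoE EtoP n y
  rw [h1, Hm_add, Hm_add, Hm_id, Subsingleton.elim (Hm PtoE n y) 0, map_zero] at h2
  exact h2

/-- order two subgroup -/
def C2 : Subgroup A4 where
  carrier := {x | x = 1 ∨ x = g01}
  one_mem' := by simp
  mul_mem' := by
    have : g01 * g01 = 1 := by decide +kernel
    rintro x y (rfl | rfl) (rfl | rfl)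
    · left; simp
    · right; simp
    · right; simp
    · left; exact this
  inv_mem' := by
    have : ∀ x : A4, (x = 1 ∨ x = g01) → (x⁻¹ = 1 ∨ x⁻¹ = g01) := by decide +kernel
    exact fun {x} hx => this x hx

instance (x : A4) : Decidable (x ∈ C2) := inferInstanceAs (Decidable (x = 1 ∨ x = g01))

/-- sign -/
def bC : C2 →* ℤˣ where
  toFun x := if x = 1 then 1 else -1
  map_one' := by simp
  map_mul' := by decide +kernel

/-- generator -/
def gC : C2 := ⟨g01, Or.inr rfl⟩

lemma gC1 : gC ≠ 1 := by decide +kernel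
lemma gC2 : ∀ x, x = 1 ∨ x = gC := by decide +kernel
lemma bgC : bC gC = -1 := by decide +kernel

/-- coinduced sign rep -/
noncomputable abbrev NN : Representation ℤ_[2] A4 (coindV C2.subtype (chi bC)) :=
  coind C2.subtype (chi bC)

lemma NN_g (f : coindV C2.subtype (chi bC)) (x : A4) : f.1 (g01 * x) = - f.1 x := by
  have h : f.1 (g01 * x) = chi bC gC (f.1 x) := f.2 gC x
  rw [h, chi_apply, bgC]
  simp

lemma g01_inv0 : (g01⁻¹).1 0 = 1 := by decide +kernel
lemma g01_inv1 : (g01⁻¹).1 1 = 0 := by decide +kernel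
lemma sharp : ∀ x y : A4, (x⁻¹).1 0 = (y⁻¹).1 0 → (x⁻¹).1 1 = (y⁻¹).1 1 → x = y := by
  decide +kernel
lemma twotrans : ∀ i j : Fin 4, i ≠ j → ∃ x : A4, (x⁻¹).1 0 = i ∧ (x⁻¹).1 1 = j := by
  decide +kernel

/-- comparison map -/
noncomputable def MtoN : MMsub →ₗ[ℤ_[2]] (coindV C2.subtype (chi bC)) where
  toFun m := ⟨fun x => m.1 ((x⁻¹).1 0) ((x⁻¹).1 1), fun s x => by
    rcases gC2 s with rfl | rfl
    · simp
    · rw [chi_apply, bgC]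
      change m.1 (((g01 * x)⁻¹).1 0) (((g01 * x)⁻¹).1 1) = _
      rw [mul_inv_rev]
      change m.1 ((x⁻¹).1 ((g01⁻¹).1 0)) ((x⁻¹).1 ((g01⁻¹).1 1)) = _
      rw [g01_inv0, g01_inv1, m.2]
      simp⟩
  map_add' _ _ := rfl
  map_smul' _ _ := rfl

lemma MtoN_bij : Function.Bijective MtoN := by
  constructor
  · rw [injective_iff_map_eq_zero]
    intro m hm
    apply Subtype.ext
    funext i j
    by_cases hij : i = j
    · subst hij
      have := m.2 i i
      change m.1 i i = 0
      have h2 : 2 * m.1 i i = 0 := by linear_combination this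
      simpa using h2
    · obtain ⟨x, rfl, rfl⟩ := twotrans i j hij
      exact congrFun (congrArg Subtype.val hm) x
  · intro F
    refine ⟨⟨fun i j => ∑ x : A4, if (x⁻¹).1 0 = i ∧ (x⁻¹).1 1 = j then F.1 x else 0, ?_⟩, ?_⟩
    · intro i j
      rw [← Finset.sum_neg_distrib]
      refine Fintype.sum_equiv (Equiv.mulLeft g01) _ _ fun x => ?_
      have h0 : ((Equiv.mulLeft g01 x)⁻¹).1 0 = (x⁻¹).1 1 := by
        rw [Equiv.coe_mulLeft, mul_inv_rev]
        change (x⁻¹).1 ((g01⁻¹).1 0) = _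
        rw [g01_inv0]
      have h1 : ((Equiv.mulLeft g01 x)⁻¹).1 1 = (x⁻¹).1 0 := by
        rw [Equiv.coe_mulLeft, mul_inv_rev]
        change (x⁻¹).1 ((g01⁻¹).1 1) = _
        rw [g01_inv1]
      rw [h0, h1, Equiv.coe_mulLeft, NN_g]
      simp only [and_comm (a := (x⁻¹).1 1 = j)]
      split_ifs <;> simp
    · apply Subtype.ext
      funext y
      change (∑ x : A4, if (x⁻¹).1 0 = (y⁻¹).1 0 ∧ (x⁻¹).1 1 = (y⁻¹).1 1 then F.1 x else 0) = F.1 y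
      rw [Finset.sum_eq_single y]
      · simp
      · intro x _ hxy
        rw [if_neg]
        rintro ⟨h0, h1⟩
        exact hxy (sharp x y h0 h1)
      · simp

/-- comparison iso -/
noncomputable def MN : MM.Equiv NN :=
  Representation.Equiv.mk (LinearEquiv.ofBijective MtoN MtoN_bij) (fun g => by
    refine LinearMap.ext fun m => Subtype.ext (funext fun x => ?_)
    change m.1 ((g⁻¹).1 ((x⁻¹).1 0)) ((g⁻¹).1 ((x⁻¹).1 1)) =
      m.1 (((x * g)⁻¹).1 0) (((x * g)⁻¹).1 1)
    rw [mul_inv_rev]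
    rfl)

lemma MM_odd (n : ℕ) (hn : Odd n) : Nat.card (HH MM n) = 2 := by
  rw [Nat.card_congr (HHcongr MN n).toEquiv, Nat.card_congr (shapiro (chi bC) n).toEquiv]
  exact cyc_same gC gC1 gC2 _ n hn.pos (Or.inr ⟨hn, fun x => by rw [chi_apply, bgC]; simp⟩)

lemma MM_even (n : ℕ) (h1 : 1 ≤ n) (hn : Even n) : Subsingleton (HH MM n) := by
  apply (Nat.card_eq_one_iff_unique.1 _).1
  rw [Nat.card_congr (HHcongr MN n).toEquiv, Nat.card_congr (shapiro (chi bC) n).toEquiv]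
  exact cyc_diff gC gC1 gC2 _ n h1 (Or.inr ⟨hn, fun x => by rw [chi_apply, bgC]; simp⟩)

end Layer6

section Layer7

section kernels

variable {G : Type} [Group G]
variable {A B C : Type} [AddCommGroup A] [Module ℤ_[2] A] [AddCommGroup B] [Module ℤ_[2] B]
  [AddCommGroup C] [Module ℤ_[2] C]
  {ρ : Representation ℤ_[2] G A} {σ : Representation ℤ_[2] G B} {τ : Representation ℤ_[2] G C}

lemma iw (f : ρ.IntertwiningMap σ) (g : G) (x : A) : f (ρ g x) = σ g (f x) :=
  congr($(f.2 g) x)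

/-- kernel rep -/
noncomputable def kerRep (f : ρ.IntertwiningMap σ) :
    Representation ℤ_[2] G (LinearMap.ker f.toLinearMap) where
  toFun g := (ρ g).restrict (p := LinearMap.ker f.toLinearMap) (q := LinearMap.ker f.toLinearMap)
    (fun x hx => by
      have hx' : f x = 0 := hx
      change f (ρ g x) = 0
      rw [iw, hx', map_zero])
  map_one' := by
    refine LinearMap.ext fun x => Subtype.ext ?_
    change ρ 1 x.1 = x.1
    simp
  map_mul' g h := by
    refine LinearMap.ext fun x => Subtype.ext ?_
    change ρ (g * h) x.1 = ρ g (ρ h x.1)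
    simp

/-- inclusion of the kernel -/
noncomputable def kerIncl (f : ρ.IntertwiningMap σ) : (kerRep f).IntertwiningMap ρ where
  toLinearMap := Submodule.subtype _
  isIntertwining' _ := rfl

/-- lift to the kernel -/
noncomputable def kerLift (f : ρ.IntertwiningMap σ) (h : τ.IntertwiningMap ρ)
    (hf : ∀ x, f (h x) = 0) : τ.IntertwiningMap (kerRep f) where
  toLinearMap := h.toLinearMap.codRestrict _ hf
  isIntertwining' g := by
    refine LinearMap.ext fun x => Subtype.ext ?_
    exact iw h g x

end kernels

/-- constants -/
noncomputable def d0 : (tr A4).IntertwiningMap PP where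
  toLinearMap :=
    { toFun z _ := z
      map_add' _ _ := rfl
      map_smul' _ _ := rfl }
  isIntertwining' _ := rfl

/-- coboundary -/
noncomputable def d1 : PP.IntertwiningMap MM where
  toLinearMap :=
    { toFun f := ⟨fun i j => f j - f i, fun i j => by ring⟩
      map_add' f g := by
        refine Subtype.ext (funext fun i => funext fun j => ?_)
        change (f j + g j) - (f i + g i) = (f j - f i) + (g j - g i)
        ring
      map_smul' c f := by
        refine Subtype.ext (funext fun i => funext fun j => ?_)
        change c * f j - c * f i = c * (f j - f i)
        ring }
  isIntertwining' _ := rfl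

/-- link vertices -/
def n1 : Fin 4 → Fin 4 := ![1, 0, 0, 0]
/-- link vertices -/
def n2 : Fin 4 → Fin 4 := ![2, 3, 1, 2]
/-- link vertices -/
def n3 : Fin 4 → Fin 4 := ![3, 2, 3, 1]

lemma n_rot : ∀ (g : A4) (l : Fin 4),
    (g.1 (n1 l) = n1 (g.1 l) ∧ g.1 (n2 l) = n2 (g.1 l) ∧ g.1 (n3 l) = n3 (g.1 l)) ∨
    (g.1 (n1 l) = n2 (g.1 l) ∧ g.1 (n2 l) = n3 (g.1 l) ∧ g.1 (n3 l) = n1 (g.1 l)) ∨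
    (g.1 (n1 l) = n3 (g.1 l) ∧ g.1 (n2 l) = n1 (g.1 l) ∧ g.1 (n3 l) = n2 (g.1 l)) := by
  decide +kernel

/-- boundary of a face -/
noncomputable def bd (m : Fin 4 → Fin 4 → ℤ_[2]) (l : Fin 4) : ℤ_[2] :=
  m (n1 l) (n2 l) + m (n2 l) (n3 l) + m (n3 l) (n1 l)

/-- sum over faces -/
noncomputable def d2 : MM.IntertwiningMap PP where
  toLinearMap :=
    { toFun m l := bd m.1 l
      map_add' f g := by
        funext l
        change (f.1 _ _ + g.1 _ _) + (f.1 _ _ + g.1 _ _) + (f.1 _ _ + g.1 _ _) = bd f.1 l + bd g.1 l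
        unfold bd
        ring
      map_smul' c f := by
        funext l
        change c * f.1 _ _ + c * f.1 _ _ + c * f.1 _ _ = c * bd f.1 l
        unfold bd
        ring }
  isIntertwining' g := by
    refine LinearMap.ext fun m => funext fun l => ?_
    change bd (fun i j => m.1 ((g⁻¹).1 i) ((g⁻¹).1 j)) l = bd m.1 ((g⁻¹).1 l)
    simp only [bd]
    rcases n_rot g⁻¹ l with ⟨h1, h2, h3⟩ | ⟨h1, h2, h3⟩ | ⟨h1, h2, h3⟩
    · rw [h1, h2, h3]
    · rw [h1, h2, h3]; ring
    · rw [h1, h2, h3]; ring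

/-- augmentation -/
noncomputable def d3 : PP.IntertwiningMap (tr A4) where
  toLinearMap :=
    { toFun f := ∑ i, f i
      map_add' f g := Finset.sum_add_distrib
      map_smul' c f := (Finset.mul_sum _ _ _).symm }
  isIntertwining' g := by
    refine LinearMap.ext fun f => ?_
    change ∑ i, f ((g⁻¹).1 i) = ∑ i, f i
    exact Equiv.sum_comp (g⁻¹).1 f

lemma MM_eqs (m : MMsub) : m.1 0 0 = 0 ∧ m.1 1 1 = 0 ∧ m.1 2 2 = 0 ∧ m.1 3 3 = 0 ∧
    m.1 1 0 = - m.1 0 1 ∧ m.1 2 0 = - m.1 0 2 ∧ m.1 3 0 = - m.1 0 3 ∧ m.1 2 1 = - m.1 1 2 ∧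
    m.1 3 1 = - m.1 1 3 ∧ m.1 3 2 = - m.1 2 3 := by
  have h : ∀ i, m.1 i i = 0 := fun i => by
    have := m.2 i i
    have h2 : 2 * m.1 i i = 0 := by linear_combination this
    simpa using h2
  exact ⟨h _, h _, h _, h _, m.2 _ _, m.2 _ _, m.2 _ _, m.2 _ _, m.2 _ _, m.2 _ _⟩

lemma d2_apply (m : MMsub) : d2 m = ![m.1 1 2 + m.1 2 3 + m.1 3 1, m.1 0 3 + m.1 3 2 + m.1 2 0,
    m.1 0 1 + m.1 1 3 + m.1 3 0, m.1 0 2 + m.1 2 1 + m.1 1 0] := by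
  funext l
  fin_cases l <;> rfl

lemma d21 (f : Fin 4 → ℤ_[2]) : d2 (d1 f) = 0 := by
  funext l
  change (f _ - f _) + (f _ - f _) + (f _ - f _) = 0
  ring

lemma d3_apply (f : Fin 4 → ℤ_[2]) : d3 f = f 0 + f 1 + f 2 + f 3 := Fin.sum_univ_four f

lemma d32 (m : MMsub) : d3 (d2 m) = 0 := by
  obtain ⟨h0, h1, h2, h3, h4, h5, h6, h7, h8, h9⟩ := MM_eqs m
  rw [d3_apply, d2_apply]
  simp only [Matrix.cons_val]
  rw [h4, h5, h6, h7, h8, h9]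
  ring

/-- middle kernel -/
noncomputable abbrev QQ := kerRep d2
/-- augmentation kernel -/
noncomputable abbrev KK := kerRep d3

lemma lesQ : ∃ δ : ∀ n, HH QQ n →ₗ[ℤ_[2]] HH (tr A4) (n + 1), ∀ n,
      Function.Exact (Hm d0 n) (Hm (kerLift d2 d1 d21) n) ∧
      Function.Exact (Hm (kerLift d2 d1 d21) n) (δ n) ∧
      Function.Exact (δ n) (Hm d0 (n + 1)) := by
  apply LES
  · intro x y h
    exact congrFun h 0
  · rintro ⟨m, hm⟩
    have hm' : d2 m = 0 := hm
    refine ⟨fun i => m.1 0 i, Subtype.ext (Subtype.ext (funext fun i => funext fun j => ?_))⟩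
    change m.1 0 j - m.1 0 i = m.1 i j
    obtain ⟨h0, h1, h2, h3, h4, h5, h6, h7, h8, h9⟩ := MM_eqs m
    rw [d2_apply] at hm'
    have e0 := congrFun hm' 0
    have e1 := congrFun hm' 1
    have e2 := congrFun hm' 2
    have e3 := congrFun hm' 3
    simp only [Matrix.cons_val, Pi.zero_apply] at e0 e1 e2 e3
    rw [h8] at e0
    rw [h9, h5] at e1
    rw [h6] at e2
    rw [h7, h4] at e3
    fin_cases i <;> fin_cases j <;> simp only [Fin.mk_zero, Fin.mk_one, Fin.reduceFinMk, h0, h1, h2, h3, h4, h5, h6, h7, h8, h9] <;> grind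
  · intro f
    constructor
    · intro h
      have h1 : (fun i j => f j - f i) = (0 : Fin 4 → Fin 4 → ℤ_[2]) :=
        congrArg (fun y => y.1.1) h
      refine ⟨f 0, funext fun i => ?_⟩
      have := congrFun (congrFun h1 i) 0
      exact sub_eq_zero.1 this
    · rintro ⟨z, rfl⟩
      refine Subtype.ext (Subtype.ext (funext fun i => funext fun j => ?_))
      change z - z = 0
      ring

lemma lesM : ∃ δ : ∀ n, HH KK n →ₗ[ℤ_[2]] HH QQ (n + 1), ∀ n,
      Function.Exact (Hm (kerIncl d2) n) (Hm (kerLift d3 d2 d32) n) ∧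
      Function.Exact (Hm (kerLift d3 d2 d32) n) (δ n) ∧
      Function.Exact (δ n) (Hm (kerIncl d2) (n + 1)) := by
  apply LES
  · exact Subtype.val_injective
  · rintro ⟨p, hp⟩
    have hp' : d3 p = 0 := hp
    rw [d3_apply] at hp'
    refine ⟨⟨![![0, 0, 0, 0], ![0, 0, - p 3, p 2], ![0, p 3, 0, - p 1], ![0, - p 2, p 1, 0]], ?_⟩, ?_⟩
    · intro i j
      fin_cases i <;> fin_cases j <;> simp
    · apply Subtype.ext
      change d2 _ = p
      rw [d2_apply]
      funext i
      fin_cases i <;> simp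
      linear_combination -hp'
  · intro m
    constructor
    · intro h
      exact ⟨⟨m, congrArg Subtype.val h⟩, rfl⟩
    · rintro ⟨⟨x, hx⟩, rfl⟩
      exact Subtype.ext hx

lemma lesK : ∃ δ : ∀ n, HH (tr A4) n →ₗ[ℤ_[2]] HH KK (n + 1), ∀ n,
      Function.Exact (Hm (kerIncl d3) n) (Hm d3 n) ∧
      Function.Exact (Hm d3 n) (δ n) ∧
      Function.Exact (δ n) (Hm (kerIncl d3) (n + 1)) := by
  apply LES
  · exact Subtype.val_injective
  · intro z
    refine ⟨![z, 0, 0, 0], ?_⟩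
    rw [d3_apply]
    simp
  · intro m
    constructor
    · intro h
      exact ⟨⟨m, h⟩, rfl⟩
    · rintro ⟨⟨x, hx⟩, rfl⟩
      exact hx

lemma exact_bij {A B C D : Type} [AddCommGroup A] [Module ℤ_[2] A] [AddCommGroup B] [Module ℤ_[2] B]
    [AddCommGroup C] [Module ℤ_[2] C] [AddCommGroup D] [Module ℤ_[2] D]
    (f : A →ₗ[ℤ_[2]] B) (g : B →ₗ[ℤ_[2]] C) (h : C →ₗ[ℤ_[2]] D)
    (e1 : Function.Exact f g) (e2 : Function.Exact g h) [Subsingleton A] [Subsingleton D] :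
    Function.Bijective g := by
  constructor
  · rw [injective_iff_map_eq_zero]
    intro x hx
    obtain ⟨y, rfl⟩ := (e1 x).1 hx
    rw [Subsingleton.elim y 0, map_zero]
  · intro y
    exact (e2 y).1 (Subsingleton.elim _ _)

lemma Qbij : ∀ n, 1 ≤ n → Nonempty (HH QQ n ≃ₗ[ℤ_[2]] HH (tr A4) (n + 1)) := by
  intro n hn
  obtain ⟨δ, hδ⟩ := lesQ
  have := PP_zero n hn
  have := PP_zero (n + 1) (by omega)
  exact ⟨LinearEquiv.ofBijective (δ n) (exact_bij _ _ _ (hδ n).2.1 (hδ n).2.2)⟩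

lemma Kbij : ∀ n, 1 ≤ n → Nonempty (HH (tr A4) n ≃ₗ[ℤ_[2]] HH KK (n + 1)) := by
  intro n hn
  obtain ⟨δ, hδ⟩ := lesK
  have := PP_zero n hn
  have := PP_zero (n + 1) (by omega)
  exact ⟨LinearEquiv.ofBijective (δ n) (exact_bij _ _ _ (hδ n).2.1 (hδ n).2.2)⟩

lemma KK0 : Subsingleton (HH KK 0) := by
  have e := (groupCohomology.H0Iso (Rep.of KK)).toLinearEquiv
  have : Subsingleton (Rep.of KK).ρ.invariants := by
    refine subsingleton_of_forall_eq 0 ?_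
    rintro ⟨x, hx⟩
    refine Subtype.ext (Subtype.ext ?_)
    have hs : d3 x.1 = 0 := x.2
    rw [d3_apply] at hs
    have h : ∀ g : A4, PP g x.1 = x.1 := fun g => congrArg Subtype.val (hx g)
    have h1 : ∀ i, x.1 i = x.1 0 := by
      intro i
      have : ∀ i : Fin 4, ∃ g : A4, (g⁻¹).1 0 = i := by decide +kernel
      obtain ⟨g, hg⟩ := this i
      have h2 := congrFun (h g) 0
      change x.1 ((g⁻¹).1 0) = x.1 0 at h2
      rwa [hg] at h2
    rw [h1 1, h1 2, h1 3] at hs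
    funext i
    change x.1 i = 0
    rw [h1 i]
    have : 4 * x.1 0 = 0 := by linear_combination hs
    simpa using this
  exact e.toEquiv.subsingleton

lemma gysin : ∃ (Q K : Type) (_ : AddCommGroup Q) (_ : Module ℤ_[2] Q) (_ : AddCommGroup K)
    (_ : Module ℤ_[2] K) (ρQ : Representation ℤ_[2] A4 Q) (ρK : Representation ℤ_[2] A4 K)
    (u : ρQ.IntertwiningMap MM) (v : MM.IntertwiningMap ρK)
    (δ : ∀ n, HH ρK n →ₗ[ℤ_[2]] HH ρQ (n + 1)), (∀ n,
      Function.Exact (Hm u n) (Hm v n) ∧ Function.Exact (Hm v n) (δ n) ∧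
      Function.Exact (δ n) (Hm u (n + 1))) ∧
    (∀ n, 1 ≤ n → Nonempty (HH ρQ n ≃ₗ[ℤ_[2]] HH (tr A4) (n + 1))) ∧
    (∀ n, 1 ≤ n → Nonempty (HH (tr A4) n ≃ₗ[ℤ_[2]] HH ρK (n + 1))) ∧
    Subsingleton (HH ρK 0) ∧
    ∃ δ' : HH (tr A4) 0 →ₗ[ℤ_[2]] HH ρK (0 + 1), Function.Surjective δ' := by
  obtain ⟨δ, hδ⟩ := lesM
  refine ⟨LinearMap.ker d2.toLinearMap, LinearMap.ker d3.toLinearMap, Submodule.addCommGroup _,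
    Submodule.module _, Submodule.addCommGroup _, Submodule.module _, QQ, KK, kerIncl d2,
    kerLift d3 d2 d32, δ, ?_⟩
  refine ⟨hδ, ?_⟩
  refine ⟨Qbij, Kbij, KK0, ?_⟩
  obtain ⟨δ', hδ'⟩ := lesK
  have s2 := PP_zero 1 le_rfl
  exact ⟨δ' 0, fun z => ((hδ' 0).2.2 z).1 (Subsingleton.elim _ _)⟩

lemma five {A B C D E : Type} [AddCommGroup A] [Module ℤ_[2] A] [AddCommGroup B] [Module ℤ_[2] B]
    [AddCommGroup C] [Module ℤ_[2] C] [AddCommGroup D] [Module ℤ_[2] D]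
    [AddCommGroup E] [Module ℤ_[2] E]
    (f : A →ₗ[ℤ_[2]] B) (g : B →ₗ[ℤ_[2]] C) (h : C →ₗ[ℤ_[2]] D) (k : D →ₗ[ℤ_[2]] E)
    (hf : Function.Injective f)
    (e1 : Function.Exact f g) (e2 : Function.Exact g h) (e3 : Function.Exact h k)
    (hk : Function.Surjective k) (hC : Nat.card C = 2) :
    (Nat.card B = 2 * Nat.card A ∧ Nat.card D = Nat.card E) ∨
    (Nat.card B = Nat.card A ∧ Nat.card D = 2 * Nat.card E) := by
  have h1 : Nat.card B = Nat.card A * Nat.card (LinearMap.range g) :=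
    card_ses f g.rangeRestrict hf (fun x => by
      rw [← e1 x, ← Subtype.coe_inj]; rfl) g.surjective_rangeRestrict
  have h2 : Nat.card D = Nat.card (LinearMap.range h) * Nat.card E :=
    card_ses (Submodule.subtype _) k Subtype.val_injective (fun x => by
      rw [e3 x]; simp) hk
  have h3 : Nat.card C = Nat.card (LinearMap.range g) * Nat.card (LinearMap.range h) :=
    card_ses (Submodule.subtype _) h.rangeRestrict Subtype.val_injective (fun x => by
      have := e2 x
      rw [← Subtype.coe_inj]
      refine this.trans ?_
      simp) h.surjective_rangeRestrict
  rw [hC] at h3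
  have h4 : Nat.card (LinearMap.range g) ∣ 2 := ⟨_, h3⟩
  rcases (Nat.dvd_prime Nat.prime_two).1 h4 with h5 | h5
  · right
    rw [h5] at h1 h3
    rw [h1, h2]
    constructor
    · ring
    · rw [← one_mul (Nat.card (LinearMap.range h)), ← h3]
  · left
    rw [h5] at h1 h3
    have h6 : Nat.card (LinearMap.range h) = 1 := by omega
    rw [h1, h2, h6]
    constructor <;> ring

/-- cardinalities -/
noncomputable def cc (n : ℕ) : ℕ := Nat.card (HH (tr A4) n)

lemma step0 (j : ℕ) (hj : Odd j) :
    (cc (j + 1 + 1 + 1) = 2 * cc j ∧ cc (j + 1) = cc (j + 1 + 1 + 1 + 1)) ∨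
    (cc (j + 1 + 1 + 1) = cc j ∧ cc (j + 1) = 2 * cc (j + 1 + 1 + 1 + 1)) := by
  obtain ⟨Q, K, _, _, _, _, ρQ, ρK, u, v, δ, hδ, Qb, Kb, K0, δ', hδ'⟩ := gysin
  obtain ⟨eQ1⟩ := Qb (j + 1 + 1) (by omega)
  obtain ⟨eQ2⟩ := Qb (j + 1 + 1 + 1) (by omega)
  obtain ⟨eK1⟩ := Kb j hj.pos
  obtain ⟨eK2⟩ := Kb (j + 1) (by omega)
  have s1 : Subsingleton (HH MM (j + 1)) := MM_even _ (by omega) hj.add_one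
  have s2 : Subsingleton (HH MM (j + 1 + 1 + 1)) := MM_even _ (by omega) hj.add_one.add_one.add_one
  have key := five (δ (j + 1)) (Hm u (j + 1 + 1))
    (Hm v (j + 1 + 1))
    (δ (j + 1 + 1)) (by
      rw [injective_iff_map_eq_zero]
      intro x hx
      obtain ⟨y, rfl⟩ := ((hδ (j + 1)).2.1 x).1 hx
      rw [Subsingleton.elim y 0, map_zero])
    (hδ (j + 1)).2.2 (hδ (j + 1 + 1)).1 (hδ (j + 1 + 1)).2.1
    (fun y => ((hδ (j + 1 + 1)).2.2 y).1 (Subsingleton.elim _ _)) (MM_odd _ hj.add_one.add_one)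
  have q1 : Nat.card (HH ρQ (j + 1 + 1)) = cc (j + 1 + 1 + 1) := Nat.card_congr eQ1.toEquiv
  have q2 : Nat.card (HH ρQ (j + 1 + 1 + 1)) = cc (j + 1 + 1 + 1 + 1) := Nat.card_congr eQ2.toEquiv
  have k1 : cc j = Nat.card (HH ρK (j + 1)) := Nat.card_congr eK1.toEquiv
  have k2 : cc (j + 1) = Nat.card (HH ρK (j + 1 + 1)) := Nat.card_congr eK2.toEquiv
  rw [q1, q2, ← k1, ← k2] at key
  exact key

lemma step (k : ℕ) : cc (2 * k + 4) = 2 * cc (2 * k + 1) ∧ cc (2 * k + 5) = cc (2 * k + 2) := by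
  have m1 : 2 ^ (k + 2) ≡ cc (2 * k + 2) [MOD 3] := A_mod2 k
  have m2 : 2 ^ (k + 2) ≡ cc (2 * k + 5) [MOD 3] := A_mod1 (k + 2)
  have m3 : ¬ 3 ∣ 2 ^ (k + 2) := fun h => by
    have := Nat.Prime.dvd_of_dvd_pow Nat.prime_three h
    omega
  unfold Nat.ModEq at m1 m2
  have key := step0 (2 * k + 1) ⟨k, rfl⟩
  simp only [add_assoc, Nat.reduceAdd] at key
  rcases key with h | h
  · exact ⟨h.1, h.2.symm⟩
  · omega

lemma cc1 : cc 1 = 1 := A_one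

lemma cc_ne (n : ℕ) (hn : 1 ≤ n) : cc n ≠ 0 := by
  have := A_fin n hn
  exact Nat.card_pos.ne'

lemma cc2 : cc 2 = 1 := by
  obtain ⟨Q, K, _, _, _, _, ρQ, ρK, u, v, δ, hδ, Qb, Kb, K0, δ', hδ'⟩ := gysin
  obtain ⟨eQ⟩ := Qb 1 le_rfl
  have hi : Function.Injective (Hm u 1) := by
    rw [injective_iff_map_eq_zero]
    intro x hx
    obtain ⟨y, rfl⟩ := ((hδ 0).2.2 x).1 hx
    rw [Subsingleton.elim y 0, map_zero]
  have hM := MM_odd 1 (by decide)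
  have : Finite (HH MM 1) := Nat.finite_of_card_ne_zero (by rw [hM]; decide)
  have h1 := Nat.card_le_card_of_injective _ hi
  have h2 : Nat.card (HH ρQ 1) = cc 2 := Nat.card_congr eQ.toEquiv
  have m : 2 ^ (0 + 2) ≡ cc 2 [MOD 3] := A_mod2 0
  rw [hM, h2] at h1
  unfold Nat.ModEq at m
  omega

lemma cc3 : cc 3 = 2 := by
  obtain ⟨Q, K, _, _, _, _, ρQ, ρK, u, v, δ, hδ, Qb, Kb, K0, δ', hδ'⟩ := gysin
  obtain ⟨eQ⟩ := Qb 2 (by omega)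
  have s1 := MM_even 2 (by omega) (by decide)
  let p : ℤ_[2] →ₗ[ℤ_[2]] HH (tr A4) 3 :=
    eQ.toLinearMap ∘ₗ δ (0 + 1) ∘ₗ δ' ∘ₗ (e0 A4).symm.toLinearMap
  have hp : Function.Surjective p := by
    intro y
    obtain ⟨z, hz⟩ := ((hδ (0 + 1)).2.2 (eQ.symm y)).1 (Subsingleton.elim _ _)
    obtain ⟨w, hw⟩ := hδ' z
    refine ⟨e0 A4 w, ?_⟩
    change eQ (δ (0 + 1) (δ' ((e0 A4).symm (e0 A4 w)))) = y
    rw [LinearEquiv.symm_apply_apply]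
    have hw' : δ' w = z := hw
    have hz' : δ (0 + 1) z = eQ.symm y := hz
    rw [hw', hz', LinearEquiv.apply_symm_apply]
  have hk : ∀ z, p (2 * z) = 0 := fun z => by
    rw [two_mul, map_add]
    exact A_two 3 (by omega) _
  have hs : Function.Surjective (fun b : Fin 2 => p (if b = 0 then 0 else 1)) := by
    intro y
    obtain ⟨z, rfl⟩ := hp y
    have h2 : ∀ u : ℤ_[2], PadicInt.toZMod u = 0 → ∃ v, u = 2 * v := by
      intro u hu
      have : u ∈ RingHom.ker (PadicInt.toZMod (p := 2)) := hu
      rw [PadicInt.ker_toZMod, PadicInt.maximalIdeal_eq_span_p, Ideal.mem_span_singleton] at this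
      exact this
    have h3 : ∀ c : ZMod 2, c = 0 ∨ c = 1 := by decide
    rcases h3 (PadicInt.toZMod z) with h | h
    · obtain ⟨v, rfl⟩ := h2 z h
      exact ⟨0, by simp [hk]⟩
    · obtain ⟨v, hv⟩ := h2 (z - 1) (by rw [map_sub, h, map_one, sub_self])
      refine ⟨1, ?_⟩
      have : z = 2 * v + 1 := by rw [← hv]; ring
      rw [this, map_add, hk]
      simp
  have h1 := Nat.card_le_card_of_surjective _ hs
  have h1' : cc 3 ≤ 2 := by
    unfold cc
    simpa using h1
  have m : 2 ^ 1 ≡ cc 3 [MOD 3] := A_mod1 1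
  have := cc_ne 3 (by omega)
  unfold Nat.ModEq at m
  omega

lemma cc_all (n : ℕ) : cc (6 * n + 1) = 2 ^ n ∧ cc (6 * n + 2) = 2 ^ n ∧
    cc (6 * n + 3) = 2 ^ (n + 1) ∧ cc (6 * n + 4) = 2 ^ (n + 1) ∧ cc (6 * n + 5) = 2 ^ n := by
  induction n with
  | zero =>
    refine ⟨cc1, cc2, cc3, ?_, ?_⟩
    · have := (step 0).1
      rw [cc1] at this
      exact this
    · have := (step 0).2
      rw [cc2] at this
      exact this
  | succ n ih =>
    obtain ⟨h1, h2, h3, h4, h5⟩ := ih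
    have a6 := (step (3 * n + 1)).1
    have a7 := (step (3 * n + 1)).2
    have a8 := (step (3 * n + 2)).1
    have a9 := (step (3 * n + 2)).2
    have a10 := (step (3 * n + 3)).1
    have a11 := (step (3 * n + 3)).2
    ring_nf at h1 h2 h3 h4 h5 a6 a7 a8 a9 a10 a11 ⊢
    rw [a7, a8, a9, a10, a11, a6, a7, a8, h3, h4, h5]
    refine ⟨?_, ?_, ?_, ?_, ?_⟩ <;> ring

lemma cc_final (n : ℕ) (h6 : ¬ (6 ∣ n)) :
    cc n = 2 ^ (n / 6 + if n % 6 = 3 ∨ n % 6 = 4 then 1 else 0) := by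
  obtain ⟨h1, h2, h3, h4, h5⟩ := cc_all (n / 6)
  have h : n % 6 = 1 ∨ n % 6 = 2 ∨ n % 6 = 3 ∨ n % 6 = 4 ∨ n % 6 = 5 := by omega
  have e := Nat.div_add_mod n 6
  rcases h with h | h | h | h | h <;> rw [h] at e ⊢
  · simpa [e] using h1
  · simpa [e] using h2
  · simpa [e] using h3
  · simpa [e] using h4
  · simpa [e] using h5

lemma elem_ab {H : Type} [AddCommGroup H] (h2 : ∀ x : H, x + x = 0) (d : ℕ)
    (hc : Nat.card H = 2 ^ d) : Nonempty (H ≃+ (Fin d → ZMod 2)) := by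
  let _ : Module (ZMod 2) H := AddCommGroup.zmodModule (fun x => by rw [two_nsmul]; exact h2 x)
  have : Finite H := Nat.finite_of_card_ne_zero (by rw [hc]; positivity)
  have h1 := Module.natCard_eq_pow_finrank (K := ZMod 2) (V := H)
  rw [hc, Nat.card_zmod] at h1
  have h3 := Nat.pow_right_injective le_rfl h1
  have h4 : Module.finrank (ZMod 2) H = Module.finrank (ZMod 2) (Fin d → ZMod 2) := by
    simp [← h3]
  exact ⟨(LinearEquiv.ofFinrankEq _ _ h4).toAddEquiv⟩

end Layer7

end A4Coh

/-- With trivial action of `A₄` on `ℤ₂`, for every `n ≥ 1` not divisible by `6`, the group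
cohomology `H^n(A₄, ℤ₂)` is the elementary abelian 2-group `(ℤ/2ℤ)^(⌊n/6⌋ + r)`, where
`r = 1` if `n ≡ 3, 4 (mod 6)` and `r = 0` if `n ≡ 1, 2, 5 (mod 6)`. -/
theorem cohomology_A4_trivial_Z2 (n : ℕ) (hn : 1 ≤ n) (h6 : ¬ (6 ∣ n)) :
    Nonempty (groupCohomology (Rep.trivial ℤ_[2] A4 ℤ_[2]) n ≃+
      (Fin (n / 6 + if n % 6 = 3 ∨ n % 6 = 4 then 1 else 0) → ZMod 2)) :=
  A4Coh.elem_ab (H := A4Coh.HH (A4Coh.tr A4) n) (A4Coh.A_two n hn) _ (A4Coh.cc_final n h6)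
end
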